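/- Jump relation for the derivative of the E-potential across the moving boundary: Let T > 0, let φ : (0,T] → ℝ be such that t ↦ t^{1−α_m} φ(t) extends to a continuous function on [0,T], and let s : [0,T] → ℝ satisfy |s(t) − s(τ)| ≤ |t − τ|^β for all t, τ ∈ [0,T], for some β > α_m/2. Then for each t ∈ (0,T]: the one-sided limits of the derivative of the potential satisfy lim_{x → s(t)⁻} (∂/∂x) ∫₀^t φ(τ) E(x − s(τ), t − τ) dτ = (1/2) φ(t) + ∫₀^t φ(τ) E_x(s(t) − s(τ), t − τ) dτ, and lim_{x → s(t)⁺} (∂/∂x) ∫₀^t φ(τ) E(x − s(τ), t − τ) dτ = −(1/2) φ(t) + ∫₀^t φ(τ) E_x(s(t) − s(τ), t − τ) dτ. -/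

import Mathlib

open MeasureTheory Real Filter Set Topology intervalIntegral

/-- The Wright function `W(z; -β, δ) = ∑ z^k/(k! Γ(δ - βk))`, with `1/Γ` the
entire reciprocal Gamma function (here `Real.Gamma` vanishes at nonpositive
integers, so division gives the correct value `0`). -/
noncomputable def wrightW (β δ z : ℝ) : ℝ :=
  ∑' k : ℕ, z ^ k / (k.factorial * Real.Gamma (δ - β * k))

/-- Laplace convolution on `(0, ∞)`. -/
noncomputable def laplaceConv (f g : ℝ → ℝ) : ℝ → ℝ :=
  fun t => ∫ τ in (0:ℝ)..t, f τ * g (t - τ)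

/-- Iterated Laplace convolution `h₀ ∗ h₁ ∗ ⋯ ∗ hₙ`. -/
noncomputable def iterConv : (n : ℕ) → (Fin (n + 1) → ℝ → ℝ) → ℝ → ℝ
  | 0, h => h 0
  | n + 1, h => laplaceConv (iterConv n (fun i => h i.castSucc)) (h (Fin.last (n + 1)))

/-- `S^μ_m(t; -ℓ₁, …, -ℓ_m; -α₁, …, -α_m)` with the decomposition `μ₁ = μ`,
`μ_j = 0` for `j ≥ 2`: the Laplace convolution of
`h_j(t) = t^{μ_j - 1} W(-ℓ_j t^{-α_j}; -α_j, μ_j)`.  Indices run over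
`Fin (n+1)`, i.e. the number of terms is `m = n + 1 ≥ 1`. -/
noncomputable def Sconv (n : ℕ) (μ : ℝ) (α ℓ : Fin (n + 1) → ℝ) : ℝ → ℝ :=
  iterConv n (fun j t =>
    t ^ ((if j = 0 then μ else 0) - 1) *
      wrightW (α j) (if j = 0 then μ else 0) (-(ℓ j) * t ^ (-(α j))))

/-- `Γ^μ₁(x,t)`. -/
noncomputable def Gam1 (n : ℕ) (α lam : Fin (n + 1) → ℝ) (μ x t : ℝ) : ℝ :=
  (4 * Real.pi) ^ (-(1/2 : ℝ)) *
    ∫ p in Set.Ioi (0:ℝ),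
      p ^ (-(1/2 : ℝ)) * Real.exp (-(|x| ^ 2) / (4 * p)) *
        Sconv n μ α (fun j => lam j * p) t

/-- The kernel `E(x,t) = Γ⁰₁(x,t)`. -/
noncomputable def kerE (n : ℕ) (α lam : Fin (n + 1) → ℝ) (x t : ℝ) : ℝ :=
  Gam1 n α lam 0 x t

/-- `E_x`, the spatial derivative of `E`. -/
noncomputable def kerEx (n : ℕ) (α lam : Fin (n + 1) → ℝ) (x t : ℝ) : ℝ :=
  deriv (fun y => kerE n α lam y t) x

/-- `E_xx`, the second spatial derivative of `E`. -/
noncomputable def kerExx (n : ℕ) (α lam : Fin (n + 1) → ℝ) (x t : ℝ) : ℝ :=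
  deriv (fun y => kerEx n α lam y t) x

/-- The kernel `Z(x,t) = ∑ₖ λₖ Γ^{1-αₖ}₁(x,t)`. -/
noncomputable def kerZ (n : ℕ) (α lam : Fin (n + 1) → ℝ) (x t : ℝ) : ℝ :=
  ∑ k : Fin (n + 1), lam k * Gam1 n α lam (1 - α k) x t

/-- `Z_x`, the spatial derivative of `Z`. -/
noncomputable def kerZx (n : ℕ) (α lam : Fin (n + 1) → ℝ) (x t : ℝ) : ℝ :=
  deriv (fun y => kerZ n α lam y t) x

/-- `Z_xx`, the second spatial derivative of `Z`. -/
noncomputable def kerZxx (n : ℕ) (α lam : Fin (n + 1) → ℝ) (x t : ℝ) : ℝ :=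
  deriv (fun y => kerZx n α lam y t) x

theorem integrableOn_rpow_mul_exp_neg_mul {s c : ℝ} (hs : -1 < s) (hc : 0 < c) :
    IntegrableOn (fun t : ℝ => t ^ s * Real.exp (-(c * t))) (Ioi 0) := by
  have h := integrableOn_rpow_mul_exp_neg_mul_rpow (s := s) (p := 1) (b := c) hs one_pos hc
  simpa using h

theorem hasDerivAt_integral_rpow_mul_cexp {s : ℝ} (hs : 0 < s) {z : ℂ} (hz : 0 < z.re) :
    HasDerivAt (fun z : ℂ => ∫ t in Ioi (0:ℝ), ((t ^ (s - 1) : ℝ) : ℂ) * Complex.exp (-(z * t)))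
      (∫ t in Ioi (0:ℝ), ((t ^ (s - 1) : ℝ) : ℂ) * (Complex.exp (-(z * t)) * (-t))) z := by
  have hnorm : ∀ (w : ℂ) (t : ℝ), ‖Complex.exp (-(w * t))‖ = Real.exp (-(w.re * t)) := by
    intro w t; rw [Complex.norm_exp]; simp
  have hmem : {w : ℂ | z.re / 2 < w.re} ∈ 𝓝 z :=
    (isOpen_lt continuous_const Complex.continuous_re).mem_nhds (by simp; linarith)
  have hm : ∀ w : ℂ, AEStronglyMeasurable
      (fun t : ℝ => ((t ^ (s - 1) : ℝ) : ℂ) * Complex.exp (-(w * t)))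
      (volume.restrict (Ioi 0)) := fun w => by fun_prop
  refine (hasDerivAt_integral_of_dominated_loc_of_deriv_le (μ := volume.restrict (Ioi (0:ℝ)))
    (bound := fun t => t ^ s * Real.exp (-(z.re / 2 * t))) hmem
    (F' := fun w (t : ℝ) => ((t ^ (s - 1) : ℝ) : ℂ) * (Complex.exp (-(w * t)) * (-t)))
    (Eventually.of_forall hm) ?_ (by fun_prop) ?_
    (integrableOn_rpow_mul_exp_neg_mul (by linarith) (by linarith)) ?_).2
  · refine (integrableOn_rpow_mul_exp_neg_mul (s := s - 1) (by linarith) hz).mono' (hm z) ?_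
    filter_upwards [ae_restrict_mem measurableSet_Ioi] with t (ht : 0 < t)
    rw [norm_mul, hnorm, Complex.norm_real, norm_of_nonneg (by positivity)]
  · filter_upwards [ae_restrict_mem measurableSet_Ioi] with t (ht : 0 < t) w (hw : _ < _)
    rw [norm_mul, norm_mul, hnorm, Complex.norm_real, norm_of_nonneg (by positivity), norm_neg,
      Complex.norm_real, norm_of_nonneg ht.le]
    have h1 : t ^ s = t ^ (s - 1) * t := by
      rw [← rpow_add_one ht.ne']; ring_nf
    rw [h1, mul_assoc, mul_comm t]
    gcongr
  · filter_upwards [ae_restrict_mem measurableSet_Ioi] with t (ht : 0 < t) w (hw : _ < _)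
    have := (((hasDerivAt_id w).mul_const (t:ℂ)).neg.cexp).const_mul ((t ^ (s - 1) : ℝ) : ℂ)
    simpa using this

/-- Euler's integral for the Gamma function along a ray in the right half plane. -/
theorem integral_rpow_mul_cexp {s : ℝ} (hs : 0 < s) {z : ℂ} (hz : 0 < z.re) :
    ∫ t in Ioi (0:ℝ), ((t ^ (s - 1) : ℝ) : ℂ) * Complex.exp (-(z * t))
      = z ^ (-(s : ℂ)) * (Real.Gamma s : ℂ) := by
  set U : Set ℂ := {w | 0 < w.re}
  have hUo : IsOpen U := isOpen_lt continuous_const Complex.continuous_re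
  have hf : AnalyticOnNhd ℂ
      (fun z : ℂ => ∫ t in Ioi (0:ℝ), ((t ^ (s - 1) : ℝ) : ℂ) * Complex.exp (-(z * t))) U :=
    DifferentiableOn.analyticOnNhd
      (fun w hw => (hasDerivAt_integral_rpow_mul_cexp hs hw).differentiableAt.differentiableWithinAt)
      hUo
  have hg : AnalyticOnNhd ℂ (fun z : ℂ => z ^ (-(s : ℂ)) * (Real.Gamma s : ℂ)) U := by
    refine DifferentiableOn.analyticOnNhd (fun w hw => ?_) hUo
    have : w ∈ Complex.slitPlane := Or.inl hw
    exact ((differentiableAt_id.cpow_const this).mul_const _).differentiableWithinAt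
  have hUc : IsPreconnected U := (convex_halfSpace_re_gt 0).isPreconnected
  refine hf.eqOn_of_preconnected_of_frequently_eq hg hUc (z₀ := ((1:ℝ):ℂ)) (by simp [U]) ?_ hz
  have hT : Tendsto (fun x : ℝ => (x : ℂ)) (𝓝[≠] (1:ℝ)) (𝓝[≠] ((1:ℝ):ℂ)) := by
    refine tendsto_nhdsWithin_iff.2
      ⟨(Complex.continuous_ofReal.tendsto 1).mono_left nhdsWithin_le_nhds, ?_⟩
    filter_upwards [self_mem_nhdsWithin] with x hx
    simpa using hx
  refine hT.frequently (Eventually.frequently ?_)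
  filter_upwards [nhdsWithin_le_nhds (lt_mem_nhds (zero_lt_one (α := ℝ)))] with x hx
  have h := Real.integral_rpow_mul_exp_neg_mul_Ioi hs hx
  have h2 : ((∫ t in Ioi (0:ℝ), t ^ (s - 1) * Real.exp (-(x * t)) : ℝ) : ℂ)
      = ∫ t in Ioi (0:ℝ), ((t ^ (s - 1) : ℝ) : ℂ) * Complex.exp (-((x:ℂ) * t)) := by
    rw [← integral_complex_ofReal]
    push_cast
    rfl
  rw [← h2, h]
  push_cast
  congr 1
  rw [← Complex.ofReal_neg, ← Complex.ofReal_cpow hx.le, one_div, inv_rpow hx.le, rpow_neg hx.le]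

/-- The opening angle of the Hankel contour used for the Wright function. -/
noncomputable def wrightAngle (α : ℝ) : ℝ := π * α / (1 + α)

/-- The integrand of the contour integral representing `W(-y; -α, 0)`. -/
noncomputable def wrightIntegrand (α y t : ℝ) : ℂ :=
  Complex.exp (-(Complex.exp (-(wrightAngle α * Complex.I)) * t)) *
    Complex.exp (-(y * Complex.exp (wrightAngle α * Complex.I) * ((t ^ α : ℝ) : ℂ)))

/-- The contour integral representing `W(-y; -α, 0)`. -/
noncomputable def wrightContour (α y : ℝ) : ℝ :=
  -(1 / π) * (Complex.exp (-(wrightAngle α * Complex.I)) *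
    ∫ t in Ioi (0:ℝ), wrightIntegrand α y t).im

theorem wrightAngle_pos {α : ℝ} (h0 : 0 < α) : 0 < wrightAngle α := by
  unfold wrightAngle; positivity

theorem wrightAngle_lt {α : ℝ} (h0 : 0 < α) (h1 : α < 1) : wrightAngle α < π / 2 := by
  unfold wrightAngle
  rw [div_lt_div_iff₀ (by linarith) two_pos]
  nlinarith [pi_pos]

theorem cos_wrightAngle_pos {α : ℝ} (h0 : 0 < α) (h1 : α < 1) : 0 < Real.cos (wrightAngle α) :=
  cos_pos_of_mem_Ioo ⟨by linarith [pi_pos, wrightAngle_pos h0], wrightAngle_lt h0 h1⟩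

theorem log_exp_neg_wrightAngle {α : ℝ} (h0 : 0 < α) (h1 : α < 1) :
    Complex.log (Complex.exp (-(wrightAngle α * Complex.I))) = -(wrightAngle α * Complex.I) := by
  have := wrightAngle_pos h0
  have := wrightAngle_lt h0 h1
  have := pi_pos
  rw [← neg_mul, ← Complex.ofReal_neg, Complex.log_exp] <;> simp <;> linarith

theorem log_exp_wrightAngle {α : ℝ} (h0 : 0 < α) (h1 : α < 1) :
    Complex.log (Complex.exp (wrightAngle α * Complex.I)) = wrightAngle α * Complex.I := by
  have := wrightAngle_pos h0
  have := wrightAngle_lt h0 h1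
  have := pi_pos
  rw [Complex.log_exp] <;> simp <;> linarith

theorem re_exp_wrightAngle (α : ℝ) :
    (Complex.exp (wrightAngle α * Complex.I)).re = Real.cos (wrightAngle α) := by
  rw [Complex.exp_ofReal_mul_I_re]

theorem re_exp_neg_wrightAngle (α : ℝ) :
    (Complex.exp (-(wrightAngle α * Complex.I))).re = Real.cos (wrightAngle α) := by
  rw [← neg_mul, ← Complex.ofReal_neg, Complex.exp_ofReal_mul_I_re, Real.cos_neg]

theorem norm_exp_neg_mul_ofReal (w : ℂ) (t : ℝ) :
    ‖Complex.exp (-(w * t))‖ = Real.exp (-(w.re * t)) := by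
  rw [Complex.norm_exp]; simp

theorem norm_wrightIntegrand (α y t : ℝ) :
    ‖wrightIntegrand α y t‖ = Real.exp (-(Real.cos (wrightAngle α) * t)) *
      Real.exp (-(y * Real.cos (wrightAngle α) * t ^ α)) := by
  rw [wrightIntegrand, norm_mul, norm_exp_neg_mul_ofReal, norm_exp_neg_mul_ofReal,
    re_exp_neg_wrightAngle, Complex.re_ofReal_mul, re_exp_wrightAngle]

theorem measurable_uncurry_wrightIntegrand (α : ℝ) :
    Measurable (Function.uncurry (wrightIntegrand α)) := by
  unfold wrightIntegrand Function.uncurry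
  fun_prop

theorem measurable_wrightContour (α : ℝ) : Measurable (wrightContour α) := by
  have h := (measurable_uncurry_wrightIntegrand α).stronglyMeasurable.integral_prod_right
    (ν := volume.restrict (Ioi (0:ℝ)))
  unfold wrightContour
  exact (Complex.measurable_im.comp (h.measurable.const_mul _)).const_mul _

theorem integrableOn_exp_rpow_sub {α y c : ℝ} (h1 : α < 1) (h0 : 0 < α) (hc : 0 < c) :
    IntegrableOn (fun t : ℝ => Real.exp (-(c * t)) * Real.exp (y * t ^ α)) (Ioi 0) := by
  refine integrable_of_isBigO_exp_neg (b := c / 2) (half_pos hc) ?_ ?_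
  · exact Continuous.continuousOn (by
      have : Continuous fun t : ℝ => t ^ α := continuous_id.rpow_const (fun _ => Or.inr h0.le)
      fun_prop)
  · have h : Tendsto (fun t : ℝ => y * t ^ (-(1 - α))) atTop (𝓝 (y * 0)) :=
      (tendsto_rpow_neg_atTop (by linarith)).const_mul y
    rw [mul_zero] at h
    refine Asymptotics.IsBigO.of_bound 1 ?_
    filter_upwards [h.eventually (gt_mem_nhds (half_pos hc)), eventually_gt_atTop 0] with t ht h0t
    rw [norm_of_nonneg (by positivity), norm_of_nonneg (by positivity), one_mul, ← Real.exp_add,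
      Real.exp_le_exp]
    have e : t ^ α = t ^ (-(1 - α)) * t := by
      rw [← rpow_add_one h0t.ne']; ring_nf
    rw [e]
    nlinarith

theorem wrightW_zero_neg {α y : ℝ} (h0 : 0 < α) (h1 : α < 1) (hy : 0 ≤ y) :
    wrightW α 0 (-y) = wrightContour α y := by
  set c := Real.cos (wrightAngle α) with hc
  have hcpos : 0 < c := cos_wrightAngle_pos h0 h1
  set r : ℂ := Complex.exp (-(wrightAngle α * Complex.I)) with hr
  set w : ℂ := Complex.exp (wrightAngle α * Complex.I) with hw
  have hrre : r.re = c := re_exp_neg_wrightAngle α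
  have hwn : ‖w‖ = 1 := Complex.norm_exp_ofReal_mul_I _
  have hsum : HasSum (fun k : ℕ => ∫ t in Ioi (0:ℝ), Complex.exp (-(r * t)) *
      ((k.factorial : ℂ)⁻¹ * (-(y * w * ((t ^ α : ℝ) : ℂ))) ^ k))
      (∫ t in Ioi (0:ℝ), wrightIntegrand α y t) := by
    have hexp : ∀ t : ℝ, HasSum (fun k : ℕ => Real.exp (-(c * t)) *
        ((k.factorial : ℝ)⁻¹ * (y * t ^ α) ^ k)) (Real.exp (-(c * t)) * Real.exp (y * t ^ α)) := by
      intro t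
      have := (NormedSpace.exp_series_hasSum_exp' (𝕂 := ℝ) (y * t ^ α)).mul_left
        (Real.exp (-(c * t)))
      simpa [Real.exp_eq_exp_ℝ] using this
    refine hasSum_integral_of_dominated_convergence (μ := volume.restrict (Ioi (0:ℝ)))
      (fun k t => Real.exp (-(c * t)) * ((k.factorial : ℝ)⁻¹ * (y * t ^ α) ^ k))
      (fun k => by fun_prop) (fun k => ?_) (ae_of_all _ fun t => (hexp t).summable) ?_ ?_
    · filter_upwards [ae_restrict_mem measurableSet_Ioi] with t (ht : 0 < t)
      rw [norm_mul, norm_exp_neg_mul_ofReal, hrre, norm_mul, norm_pow, norm_neg, norm_mul, norm_mul,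
        hwn, Complex.norm_real, Complex.norm_real, norm_of_nonneg hy,
        norm_of_nonneg (by positivity), mul_one]
      simp
    · simp_rw [fun t => (hexp t).tsum_eq]
      exact integrableOn_exp_rpow_sub h1 h0 hcpos
    · refine ae_of_all _ fun t => ?_
      have := (NormedSpace.exp_series_hasSum_exp' (𝕂 := ℂ)
        (-(y * w * ((t ^ α : ℝ) : ℂ)))).mul_left (Complex.exp (-(r * t)))
      simpa [Complex.exp_eq_exp_ℂ, wrightIntegrand, hr, hw] using this
  have hterm : ∀ k : ℕ, -(1 / π) * (r * ∫ t in Ioi (0:ℝ), Complex.exp (-(r * t)) *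
      ((k.factorial : ℂ)⁻¹ * (-(y * w * ((t ^ α : ℝ) : ℂ))) ^ k)).im
      = (-y) ^ k / (k.factorial * Real.Gamma (0 - α * k)) := by
    intro k
    have hk : 0 < 1 + α * k := by positivity
    have hpow : w ^ k * (r * r ^ (-((1 + α * k : ℝ) : ℂ))) = Complex.exp ((π * (α * k) : ℝ) * Complex.I) := by
      rw [Complex.cpow_def_of_ne_zero (Complex.exp_ne_zero _), log_exp_neg_wrightAngle h0 h1, hw, ← Complex.exp_nat_mul,
        ← Complex.exp_add, ← Complex.exp_add]
      congr 1
      have ha : (1 + α : ℂ) ≠ 0 := by exact_mod_cast (by positivity : (1 + α : ℝ) ≠ 0)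
      unfold wrightAngle
      push_cast
      field_simp
      ring
    have hinteg : ∫ t in Ioi (0:ℝ), Complex.exp (-(r * t)) *
        ((k.factorial : ℂ)⁻¹ * (-(y * w * ((t ^ α : ℝ) : ℂ))) ^ k)
        = ((((k.factorial : ℝ)⁻¹ * (-y) ^ k : ℝ) : ℂ) * w ^ k) *
          (r ^ (-((1 + α * k : ℝ) : ℂ)) * (Real.Gamma (1 + α * k) : ℂ)) := by
      rw [← integral_rpow_mul_cexp hk (hrre ▸ hcpos), ← MeasureTheory.integral_const_mul]
      refine setIntegral_congr_fun measurableSet_Ioi fun t (ht : 0 < t) => ?_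
      have : (t ^ (1 + α * k - 1 : ℝ)) = (t ^ α) ^ k := by
        rw [← rpow_natCast, ← rpow_mul ht.le]; ring_nf
      simp only [this]
      push_cast
      rw [← neg_mul, ← neg_mul]
      ring
    have e : r * ((((k.factorial : ℝ)⁻¹ * (-y) ^ k : ℝ) : ℂ) * w ^ k *
          (r ^ (-((1 + α * k : ℝ) : ℂ)) * (Real.Gamma (1 + α * k) : ℂ)))
        = (((k.factorial : ℝ)⁻¹ * (-y) ^ k * Real.Gamma (1 + α * k) : ℝ) : ℂ)
          * Complex.exp ((π * (α * k) : ℝ) * Complex.I) := by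
      rw [← hpow]; push_cast; ring
    rw [hinteg, e, Complex.im_ofReal_mul, Complex.exp_ofReal_mul_I_im]
    have hG := Real.Gamma_mul_Gamma_one_sub (0 - α * k)
    have h2 : 1 - (0 - α * k) = 1 + α * k := by ring
    have h3 : Real.sin (π * (0 - α * k)) = -Real.sin (π * (α * k)) := by
      rw [← Real.sin_neg]; ring_nf
    rw [h2, h3] at hG
    have hGp := Real.Gamma_pos_of_pos hk
    by_cases hs : Real.sin (π * (α * k)) = 0
    · rw [hs] at hG ⊢
      have : Real.Gamma (0 - α * k) = 0 := by
        simpa [hGp.ne'] using hG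
      rw [this]; simp
    · have : Real.Gamma (0 - α * k) = π / (-Real.sin (π * (α * k))) / Real.Gamma (1 + α * k) := by
        rw [← hG]; field_simp
      rw [this]
      have := pi_pos.ne'
      field_simp
  have h := ((Complex.hasSum_im (hsum.mul_left r)).mul_left (-(1 / π)))
  simp_rw [hterm] at h
  exact h.tsum_eq

theorem exp_neg_le_inv {u : ℝ} (hu : 0 < u) : Real.exp (-u) ≤ u⁻¹ := by
  rw [Real.exp_neg]
  exact inv_anti₀ hu (by linarith [Real.add_one_le_exp u])

theorem norm_exp_neg_sub_one_le {z : ℂ} (hz : 0 ≤ z.re) : ‖Complex.exp (-z) - 1‖ ≤ 2 * ‖z‖ := by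
  rcases le_total ‖z‖ 1 with h | h
  · simpa using Complex.norm_exp_sub_one_le (x := -z) (by simpa using h)
  · calc ‖Complex.exp (-z) - 1‖ ≤ ‖Complex.exp (-z)‖ + ‖(1:ℂ)‖ := norm_sub_le _ _
      _ ≤ 1 + 1 := by
          gcongr
          · rw [Complex.norm_exp]; simpa using hz
          · simp
      _ ≤ 2 * ‖z‖ := by linarith

theorem measurable_wrightIntegrand (α y : ℝ) : Measurable (wrightIntegrand α y) :=
  (measurable_uncurry_wrightIntegrand α).comp measurable_prodMk_left

theorem norm_wrightIntegrand_le {α y t : ℝ} (h0 : 0 < α) (h1 : α < 1) (hy : 0 ≤ y) (ht : 0 < t) :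
    ‖wrightIntegrand α y t‖ ≤ Real.exp (-(Real.cos (wrightAngle α) * t)) := by
  have hc := cos_wrightAngle_pos h0 h1
  rw [norm_wrightIntegrand]
  refine mul_le_of_le_one_right (by positivity) ?_
  rw [Real.exp_le_one_iff, neg_nonpos]
  positivity

theorem integrableOn_wrightIntegrand {α y : ℝ} (h0 : 0 < α) (h1 : α < 1) (hy : 0 ≤ y) :
    IntegrableOn (wrightIntegrand α y) (Ioi 0) := by
  have h := integrableOn_rpow_mul_exp_neg_mul (s := 0) (by norm_num) (cos_wrightAngle_pos h0 h1)
  refine h.mono' (measurable_wrightIntegrand α y).aestronglyMeasurable ?_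
  filter_upwards [ae_restrict_mem measurableSet_Ioi] with t (ht : 0 < t)
  simpa using norm_wrightIntegrand_le h0 h1 hy ht

theorem abs_wrightContour_le (α y : ℝ) :
    |wrightContour α y| ≤ ‖∫ t in Ioi (0:ℝ), wrightIntegrand α y t‖ := by
  have hr : ‖Complex.exp (-(wrightAngle α * Complex.I))‖ = 1 := by
    rw [← neg_mul, ← Complex.ofReal_neg, Complex.norm_exp_ofReal_mul_I]
  rw [wrightContour, abs_mul, abs_neg, abs_of_pos (by positivity)]
  have h1 : 1 / π ≤ 1 := by rw [div_le_one pi_pos]; linarith [pi_gt_three]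
  calc _ ≤ 1 * ‖Complex.exp (-(wrightAngle α * Complex.I)) *
        ∫ t in Ioi (0:ℝ), wrightIntegrand α y t‖ := by
        gcongr
        exact Complex.abs_im_le_norm _
    _ = _ := by rw [norm_mul, hr, one_mul, one_mul]

theorem exists_wrightContour_bound {α : ℝ} (h0 : 0 < α) (h1 : α < 1) :
    ∃ C, 0 ≤ C ∧ ∀ y, 0 < y → |wrightContour α y| ≤ C ∧ |wrightContour α y| ≤ C * y ∧
      |wrightContour α y| ≤ C * y⁻¹ := by
  set c := Real.cos (wrightAngle α) with hc
  have hcpos : 0 < c := cos_wrightAngle_pos h0 h1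
  set A := ∫ t in Ioi (0:ℝ), t ^ (0:ℝ) * Real.exp (-(c * t))
  set B := ∫ t in Ioi (0:ℝ), 2 * (t ^ α * Real.exp (-(c * t)))
  set D := ∫ t in Ioi (0:ℝ), c⁻¹ * (t ^ (-α) * Real.exp (-(c * t)))
  have hA : 0 ≤ A := setIntegral_nonneg measurableSet_Ioi fun t (ht : 0 < t) => by positivity
  have hB : 0 ≤ B := setIntegral_nonneg measurableSet_Ioi fun t (ht : 0 < t) => by positivity
  have hD : 0 ≤ D := setIntegral_nonneg measurableSet_Ioi fun t (ht : 0 < t) => by positivity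
  have iA := integrableOn_rpow_mul_exp_neg_mul (s := 0) (by norm_num) hcpos
  have iB := (integrableOn_rpow_mul_exp_neg_mul (s := α) (by linarith) hcpos).const_mul 2
  have iD := (integrableOn_rpow_mul_exp_neg_mul (s := -α) (by linarith) hcpos).const_mul c⁻¹
  refine ⟨A + B + D, by positivity, fun y hy => ?_⟩
  have e1 : |wrightContour α y| ≤ A := by
    refine (abs_wrightContour_le α y).trans (norm_integral_le_of_norm_le iA ?_)
    filter_upwards [ae_restrict_mem measurableSet_Ioi] with t (ht : 0 < t)
    simpa using norm_wrightIntegrand_le h0 h1 hy.le ht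
  have e3 : |wrightContour α y| ≤ D * y⁻¹ := by
    rw [← MeasureTheory.integral_mul_const]
    refine (abs_wrightContour_le α y).trans (norm_integral_le_of_norm_le (iD.mul_const _) ?_)
    filter_upwards [ae_restrict_mem measurableSet_Ioi] with t (ht : 0 < t)
    rw [norm_wrightIntegrand]
    have hu : 0 < y * c * t ^ α := by positivity
    calc _ ≤ Real.exp (-(c * t)) * (y * c * t ^ α)⁻¹ := by
          gcongr; exact exp_neg_le_inv hu
      _ = _ := by rw [rpow_neg ht.le]; field_simp
  have e2 : |wrightContour α y| ≤ B * y := by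
    set r : ℂ := Complex.exp (-(wrightAngle α * Complex.I)) with hr
    set w : ℂ := Complex.exp (wrightAngle α * Complex.I) with hw
    have hrre : r.re = c := re_exp_neg_wrightAngle α
    have hwre : w.re = c := re_exp_wrightAngle α
    have hwn : ‖w‖ = 1 := Complex.norm_exp_ofReal_mul_I _
    have hrn : ‖r‖ = 1 := by
      rw [hr, ← neg_mul, ← Complex.ofReal_neg, Complex.norm_exp_ofReal_mul_I]
    have hone : r * ∫ t in Ioi (0:ℝ), Complex.exp (-(r * t)) = 1 := by
      have := integral_rpow_mul_cexp (s := 1) one_pos (z := r) (hrre ▸ hcpos)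
      simp only [sub_self, rpow_zero, Complex.ofReal_one, one_mul, Real.Gamma_one, mul_one,
        Complex.cpow_neg_one] at this
      rw [this, mul_inv_cancel₀ (Complex.exp_ne_zero _)]
    have hinteg : IntegrableOn (fun t : ℝ => Complex.exp (-(r * t))) (Ioi 0) := by
      refine iA.mono' (by fun_prop) ?_
      filter_upwards with t
      rw [norm_exp_neg_mul_ofReal, hrre]; simp
    have hsub : wrightContour α y = -(1 / π) *
        (r * ∫ t in Ioi (0:ℝ), (wrightIntegrand α y t - Complex.exp (-(r * t)))).im := by
      rw [MeasureTheory.integral_sub (integrableOn_wrightIntegrand h0 h1 hy.le) hinteg, mul_sub, hone]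
      simp [wrightContour, hr]
    have hpi : 1 / π ≤ 1 := by rw [div_le_one pi_pos]; linarith [pi_gt_three]
    rw [hsub, abs_mul, abs_neg, abs_of_pos (by positivity : 0 < 1 / π)]
    calc _ ≤ 1 * ‖r * ∫ t in Ioi (0:ℝ), (wrightIntegrand α y t - Complex.exp (-(r * t)))‖ := by
          gcongr
          exact Complex.abs_im_le_norm _
      _ = ‖∫ t in Ioi (0:ℝ), (wrightIntegrand α y t - Complex.exp (-(r * t)))‖ := by
          rw [norm_mul, hrn, one_mul, one_mul]
      _ ≤ B * y := by
          rw [← MeasureTheory.integral_mul_const]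
          refine norm_integral_le_of_norm_le (iB.mul_const _) ?_
          filter_upwards [ae_restrict_mem measurableSet_Ioi] with t (ht : 0 < t)
          have e : wrightIntegrand α y t - Complex.exp (-(r * t)) =
              Complex.exp (-(r * t)) * (Complex.exp (-(y * w * ((t ^ α : ℝ) : ℂ))) - 1) := by
            rw [wrightIntegrand]; ring
          rw [e, norm_mul, norm_exp_neg_mul_ofReal, hrre]
          have h := norm_exp_neg_sub_one_le (z := y * w * ((t ^ α : ℝ) : ℂ)) (by
            rw [Complex.re_mul_ofReal, Complex.re_ofReal_mul, hwre]; positivity)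
          rw [norm_mul, norm_mul, hwn, Complex.norm_real, Complex.norm_real, norm_of_nonneg hy.le,
            norm_of_nonneg (by positivity)] at h
          calc _ ≤ Real.exp (-(c * t)) * (2 * (y * 1 * t ^ α)) := by gcongr
            _ = _ := by ring
  refine ⟨by linarith, ?_, ?_⟩
  · refine e2.trans ?_
    gcongr
    linarith
  · refine e3.trans ?_
    gcongr
    linarith

theorem mellin_wrightContour {α s : ℝ} (h0 : 0 < α) (h1 : α < 1) (hs : 0 < s) (hs1 : s < 1) :
    ∫ y in Ioi (0:ℝ), y ^ (s - 1) * wrightContour α y =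
      π⁻¹ * Real.Gamma s * Real.Gamma (1 - α * s) * Real.sin (π * (α * s)) := by
  set c := Real.cos (wrightAngle α) with hc
  have hcpos : 0 < c := cos_wrightAngle_pos h0 h1
  set r : ℂ := Complex.exp (-(wrightAngle α * Complex.I)) with hr
  set w : ℂ := Complex.exp (wrightAngle α * Complex.I) with hw
  have hrre : r.re = c := re_exp_neg_wrightAngle α
  have hwre : w.re = c := re_exp_wrightAngle α
  have has : α * s < 1 := by nlinarith
  set J : ℝ → ℝ → ℂ := fun y t => ((y ^ (s - 1) : ℝ) : ℂ) * wrightIntegrand α y t with hJ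
  have hJm : Measurable (Function.uncurry J) := by
    have := measurable_uncurry_wrightIntegrand α
    have h2 : Measurable fun p : ℝ × ℝ => ((p.1 ^ (s - 1) : ℝ) : ℂ) := by fun_prop
    exact h2.mul this
  have hnormJ : ∀ t, 0 < t → ∀ y, 0 < y → ‖J y t‖ =
      Real.exp (-(c * t)) * (y ^ (s - 1) * Real.exp (-((c * t ^ α) * y))) := by
    intro t ht y hy
    simp only [hJ]
    rw [norm_mul, norm_wrightIntegrand, Complex.norm_real, norm_of_nonneg (by positivity),
      mul_left_comm, ← hc]
    ring_nf
  have hJint : Integrable (Function.uncurry J)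
      ((volume.restrict (Ioi (0:ℝ))).prod (volume.restrict (Ioi (0:ℝ)))) := by
    rw [integrable_prod_iff' hJm.aestronglyMeasurable]
    constructor
    · filter_upwards [ae_restrict_mem measurableSet_Ioi] with t (ht : 0 < t)
      refine ((integrableOn_rpow_mul_exp_neg_mul (s := s - 1) (c := c * t ^ α) (by linarith)
        (by positivity)).const_mul (Real.exp (-(c * t)))).mono'
        (hJm.comp measurable_prodMk_right).aestronglyMeasurable ?_
      filter_upwards [ae_restrict_mem measurableSet_Ioi] with y (hy : 0 < y)
      exact (hnormJ t ht y hy).le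
    · have := (integrableOn_rpow_mul_exp_neg_mul (s := -(α * s)) (by linarith) hcpos).const_mul
        ((1 / c) ^ s * Real.Gamma s)
      refine this.congr ?_
      filter_upwards [ae_restrict_mem measurableSet_Ioi] with t (ht : 0 < t)
      have e : ∫ y in Ioi (0:ℝ), ‖J y t‖ = ∫ y in Ioi (0:ℝ),
          Real.exp (-(c * t)) * (y ^ (s - 1) * Real.exp (-((c * t ^ α) * y))) :=
        setIntegral_congr_fun measurableSet_Ioi fun y hy => hnormJ t ht y hy
      simp only [Function.uncurry]
      rw [e, MeasureTheory.integral_const_mul, Real.integral_rpow_mul_exp_neg_mul_Ioi hs (by positivity),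
        one_div, one_div, mul_inv, mul_rpow (by positivity) (by positivity), ← rpow_neg ht.le,
        ← rpow_mul ht.le]
      ring_nf
  have hswap := integral_integral_swap hJint
  have hinner : ∀ t : ℝ, 0 < t → ∫ y in Ioi (0:ℝ), J y t =
      (w ^ (-(s:ℂ)) * Real.Gamma s) * (((t ^ (1 - α * s - 1) : ℝ) : ℂ) * Complex.exp (-(r * t))) := by
    intro t ht
    have e : ∀ y, J y t = Complex.exp (-(r * t)) *
        (((y ^ (s - 1) : ℝ) : ℂ) * Complex.exp (-((((t ^ α : ℝ) : ℂ) * w) * y))) := by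
      intro y
      simp only [hJ, wrightIntegrand]
      rw [mul_left_comm]
      congr 4
      ring
    simp_rw [e]
    have htp : 0 < t ^ α := by positivity
    have hpow : (((t ^ α : ℝ) : ℂ) * w) ^ (-(s:ℂ)) = w ^ (-(s:ℂ)) * ((t ^ (1 - α * s - 1) : ℝ) : ℂ) := by
      have hw0 : w ≠ 0 := Complex.exp_ne_zero _
      have ht0 : ((t ^ α : ℝ) : ℂ) ≠ 0 := by exact_mod_cast htp.ne'
      rw [Complex.cpow_def_of_ne_zero (mul_ne_zero ht0 hw0), Complex.log_ofReal_mul htp hw0,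
        add_mul, Complex.exp_add, mul_comm, ← Complex.cpow_def_of_ne_zero hw0]
      congr 1
      rw [show (1 - α * s - 1 : ℝ) = α * (-s) by ring, rpow_mul ht.le, rpow_def_of_pos htp]
      push_cast
      rfl
    rw [MeasureTheory.integral_const_mul, integral_rpow_mul_cexp hs (by
      rw [Complex.re_ofReal_mul, hwre]; positivity), hpow]
    ring
  have hA : ∫ y in Ioi (0:ℝ), ∫ t in Ioi (0:ℝ), J y t =
      (w ^ (-(s:ℂ)) * Real.Gamma s) * (r ^ (-((1 - α * s : ℝ):ℂ)) * (Real.Gamma (1 - α * s) : ℂ)) := by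
    rw [hswap, setIntegral_congr_fun measurableSet_Ioi hinner, MeasureTheory.integral_const_mul,
      integral_rpow_mul_cexp (by linarith) (hrre ▸ hcpos)]
  have hpow : w ^ (-(s:ℂ)) * (r * r ^ (-((1 - α * s : ℝ) : ℂ))) =
      Complex.exp ((-(π * (α * s)) : ℝ) * Complex.I) := by
    rw [Complex.cpow_def_of_ne_zero (Complex.exp_ne_zero _), log_exp_wrightAngle h0 h1,
      Complex.cpow_def_of_ne_zero (Complex.exp_ne_zero _), log_exp_neg_wrightAngle h0 h1, hr,
      ← Complex.exp_add, ← Complex.exp_add]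
    congr 1
    have ha : (1 + α : ℂ) ≠ 0 := by exact_mod_cast (by positivity : (1 + α : ℝ) ≠ 0)
    unfold wrightAngle
    push_cast
    field_simp
    ring
  have hlhs : ∀ y : ℝ, y ^ (s - 1) * wrightContour α y =
      -(1 / π) * (r * ∫ t in Ioi (0:ℝ), J y t).im := by
    intro y
    simp only [hJ]
    rw [MeasureTheory.integral_const_mul, mul_left_comm, Complex.im_ofReal_mul, wrightContour]
    ring
  simp_rw [hlhs]
  have him : ∫ y in Ioi (0:ℝ), (r * ∫ t in Ioi (0:ℝ), J y t).im =
      (∫ y in Ioi (0:ℝ), r * ∫ t in Ioi (0:ℝ), J y t).im := by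
    exact (integral_im (𝕜 := ℂ) (hJint.integral_prod_left.const_mul r))
  rw [MeasureTheory.integral_const_mul, him, MeasureTheory.integral_const_mul, hA]
  have e : r * ((w ^ (-(s:ℂ)) * Real.Gamma s) *
      (r ^ (-((1 - α * s : ℝ):ℂ)) * (Real.Gamma (1 - α * s) : ℂ))) =
      ((Real.Gamma s * Real.Gamma (1 - α * s) : ℝ) : ℂ) *
        Complex.exp ((-(π * (α * s)) : ℝ) * Complex.I) := by
    rw [← hpow]; push_cast; ring
  rw [e, Complex.im_ofReal_mul, Complex.exp_ofReal_mul_I_im, Real.sin_neg]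
  ring

theorem tendsto_mellin_wrightContour_value {α : ℝ} :
    Tendsto (fun s : ℝ => π⁻¹ * Real.Gamma s * Real.Gamma (1 - α * s) * Real.sin (π * (α * s)))
      (𝓝[>] 0) (𝓝 α) := by
  have hd : ContinuousAt Real.Gamma 1 := (Real.differentiableAt_Gamma fun m h => by
    have : (0:ℝ) ≤ m := m.cast_nonneg
    linarith).continuousAt
  have h1 : Tendsto (fun s : ℝ => Real.Gamma (s + 1)) (𝓝[>] 0) (𝓝 1) := by
    have hc : Tendsto (fun s : ℝ => s + 1) (𝓝[>] 0) (𝓝 1) := by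
      have : Tendsto (fun s : ℝ => s + 1) (𝓝 0) (𝓝 (0 + 1)) := by
        exact (continuous_id.add continuous_const).tendsto 0
      simpa using this.mono_left nhdsWithin_le_nhds
    simpa [Function.comp_def] using hd.tendsto.comp hc
  have h2 : Tendsto (fun s : ℝ => Real.Gamma (1 - α * s)) (𝓝[>] 0) (𝓝 1) := by
    have hc : Tendsto (fun s : ℝ => 1 - α * s) (𝓝[>] 0) (𝓝 1) := by
      have : Tendsto (fun s : ℝ => 1 - α * s) (𝓝 0) (𝓝 (1 - α * 0)) :=
        (continuous_const.sub (continuous_const.mul continuous_id)).tendsto 0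
      simpa using this.mono_left nhdsWithin_le_nhds
    simpa [Function.comp_def] using hd.tendsto.comp hc
  have h3 : Tendsto (fun s : ℝ => s⁻¹ * Real.sin (π * (α * s))) (𝓝[>] 0) (𝓝 (π * α)) := by
    have hd : HasDerivAt (fun s : ℝ => Real.sin (π * (α * s))) (π * α) 0 := by
      have := (((hasDerivAt_id (0:ℝ)).const_mul α).const_mul π).sin
      simpa using this
    have := (hasDerivAt_iff_tendsto_slope_zero.1 hd).mono_left
      (nhdsWithin_mono 0 (show Ioi (0:ℝ) ⊆ {0}ᶜ from fun x (hx : 0 < x) => hx.ne'))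
    simpa using this
  have h := ((h1.mul h2).mul h3).const_mul π⁻¹
  have e : π⁻¹ * (1 * 1 * (π * α)) = α := by
    have := pi_pos.ne'
    field_simp
  rw [e] at h
  refine h.congr' ?_
  filter_upwards [self_mem_nhdsWithin] with s (hs : 0 < s)
  rw [Real.Gamma_add_one hs.ne']
  field_simp

theorem integrableOn_min_rpow :
    IntegrableOn (fun y : ℝ => if y ≤ 1 then (1:ℝ) else y ^ (-(3/2) : ℝ)) (Ioi 0) := by
  rw [← Ioc_union_Ioi_eq_Ioi (zero_le_one (α := ℝ))]
  refine IntegrableOn.union ?_ ?_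
  · refine (integrableOn_const (C := (1:ℝ)) (by simp)).congr_fun (fun y hy => ?_) measurableSet_Ioc
    simp [hy.2]
  · refine (integrableOn_Ioi_rpow_of_lt (a := -(3/2)) (by norm_num) one_pos).congr_fun
      (fun y (hy : 1 < y) => ?_) measurableSet_Ioi
    simp [hy]

theorem abs_rpow_mul_wrightContour_le {α C s y : ℝ}
    (hC : |wrightContour α y| ≤ C * y ∧ |wrightContour α y| ≤ C * y⁻¹) (hC0 : 0 ≤ C)
    (hy : 0 < y) (hs : 0 ≤ s) (hs1 : s ≤ 1 / 2) :
    ‖y ^ (s - 1) * wrightContour α y‖ ≤ C * if y ≤ 1 then (1:ℝ) else y ^ (-(3/2) : ℝ) := by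
  rw [norm_mul, norm_of_nonneg (by positivity), Real.norm_eq_abs]
  split_ifs with h
  · calc _ ≤ y ^ (s - 1) * (C * y) := by gcongr; exact hC.1
      _ = C * y ^ s := by
        rw [mul_left_comm, ← rpow_add_one hy.ne']; ring_nf
      _ ≤ C * 1 := by
        gcongr
        exact rpow_le_one hy.le h hs
  · calc _ ≤ y ^ (s - 1) * (C * y⁻¹) := by gcongr; exact hC.2
      _ = C * y ^ (s - 2) := by
        rw [mul_left_comm, ← rpow_neg_one y, ← rpow_add hy]; ring_nf
      _ ≤ C * y ^ (-(3/2) : ℝ) := by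
        gcongr
        · linarith
        · linarith

theorem integrableOn_inv_mul_wrightContour {α : ℝ} (h0 : 0 < α) (h1 : α < 1) :
    IntegrableOn (fun y => y⁻¹ * wrightContour α y) (Ioi 0) := by
  obtain ⟨C, hC0, hC⟩ := exists_wrightContour_bound h0 h1
  refine (integrableOn_min_rpow.const_mul C).mono'
    (measurable_inv.mul (measurable_wrightContour α)).aestronglyMeasurable ?_
  filter_upwards [ae_restrict_mem measurableSet_Ioi] with y (hy : 0 < y)
  have := abs_rpow_mul_wrightContour_le (hC y hy).2 hC0 hy le_rfl (by norm_num)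
  rwa [zero_sub, rpow_neg_one] at this

theorem integral_inv_mul_wrightContour {α : ℝ} (h0 : 0 < α) (h1 : α < 1) :
    ∫ y in Ioi (0:ℝ), y⁻¹ * wrightContour α y = α := by
  obtain ⟨C, hC0, hC⟩ := exists_wrightContour_bound h0 h1
  have hlim : Tendsto (fun s : ℝ => ∫ y in Ioi (0:ℝ), y ^ (s - 1) * wrightContour α y)
      (𝓝[>] 0) (𝓝 (∫ y in Ioi (0:ℝ), y⁻¹ * wrightContour α y)) := by
    refine tendsto_integral_filter_of_dominated_convergence
      (fun y => C * if y ≤ 1 then (1:ℝ) else y ^ (-(3/2) : ℝ)) ?_ ?_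
      (integrableOn_min_rpow.const_mul C) ?_
    · refine Eventually.of_forall fun s => ?_
      have := measurable_wrightContour α
      exact (Measurable.mul (by fun_prop) this).aestronglyMeasurable
    · filter_upwards [Ioo_mem_nhdsGT (show (0:ℝ) < 1/2 by norm_num)] with s hs
      filter_upwards [ae_restrict_mem measurableSet_Ioi] with y (hy : 0 < y)
      exact abs_rpow_mul_wrightContour_le (hC y hy).2 hC0 hy hs.1.le hs.2.le
    · filter_upwards [ae_restrict_mem measurableSet_Ioi] with y (hy : 0 < y)
      have : Tendsto (fun s : ℝ => y ^ (s - 1)) (𝓝 0) (𝓝 (y ^ ((0:ℝ) - 1))) :=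
        ((continuous_const.rpow (continuous_id.sub continuous_const)
          (fun _ => Or.inl hy.ne'))).tendsto 0
      rw [zero_sub, rpow_neg_one] at this
      exact (this.mono_left nhdsWithin_le_nhds).mul_const _
  refine tendsto_nhds_unique hlim (tendsto_mellin_wrightContour_value.congr' ?_)
  filter_upwards [Ioo_mem_nhdsGT (zero_lt_one (α := ℝ))] with s hs
  exact (mellin_wrightContour h0 h1 hs.1 hs.2).symm

theorem inv_mul_comp_rpow_eq {α t : ℝ} (h0 : 0 < α) (ht : 0 < t) (ℓ : ℝ) (g : ℝ → ℝ) :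
    (|(-α)| * t ^ (-α - 1)) • (α⁻¹ * ((t ^ (-α))⁻¹ * g (ℓ * t ^ (-α)))) =
      t⁻¹ * g (ℓ * t ^ (-α)) := by
  rw [abs_neg, abs_of_pos h0, rpow_sub_one ht.ne', smul_eq_mul]
  have : t ^ (-α) ≠ 0 := by positivity
  field_simp

theorem integral_inv_mul_comp_rpow {α ℓ : ℝ} (h0 : 0 < α) (hℓ : 0 < ℓ) (g : ℝ → ℝ) :
    ∫ t in Ioi (0:ℝ), t⁻¹ * g (ℓ * t ^ (-α)) = α⁻¹ * ∫ y in Ioi (0:ℝ), y⁻¹ * g y := by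
  have h := integral_comp_rpow_Ioi (fun u => α⁻¹ * (u⁻¹ * g (ℓ * u))) (neg_ne_zero.2 h0.ne')
  rw [setIntegral_congr_fun measurableSet_Ioi
    (fun t (ht : 0 < t) => inv_mul_comp_rpow_eq h0 ht ℓ g)] at h
  rw [h, MeasureTheory.integral_const_mul]
  congr 1
  have h2 := integral_comp_mul_left_Ioi (fun y => y⁻¹ * g y) 0 hℓ
  rw [mul_zero, smul_eq_mul] at h2
  rw [← mul_right_inj' (inv_ne_zero hℓ.ne'), ← h2, ← MeasureTheory.integral_const_mul]
  simp_rw [mul_inv, mul_assoc]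

theorem integrableOn_inv_mul_comp_rpow {α ℓ : ℝ} (h0 : 0 < α) (hℓ : 0 < ℓ) {g : ℝ → ℝ}
    (hg : IntegrableOn (fun y => y⁻¹ * g y) (Ioi 0)) :
    IntegrableOn (fun t => t⁻¹ * g (ℓ * t ^ (-α))) (Ioi 0) := by
  have h2 := (integrableOn_Ioi_comp_mul_left_iff (fun y => y⁻¹ * g y) 0 hℓ).2 (by simpa using hg)
  have h3 : IntegrableOn (fun u => α⁻¹ * (u⁻¹ * g (ℓ * u))) (Ioi 0) := by
    refine IntegrableOn.congr_fun ((h2.const_mul ℓ).const_mul α⁻¹) (fun u (hu : 0 < u) => ?_)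
      measurableSet_Ioi
    rw [mul_inv]; field_simp
  have h := (integrableOn_Ioi_comp_rpow_iff (fun u => α⁻¹ * (u⁻¹ * g (ℓ * u)))
    (neg_ne_zero.2 h0.ne')).2 h3
  exact h.congr_fun (fun t (ht : 0 < t) => inv_mul_comp_rpow_eq h0 ht ℓ g) measurableSet_Ioi

/-- The quantitative properties of the densities `t ↦ S⁰(t; -pλ; -α)` used for the potential
theory of `E`; the orders `α_j` lie in `[b, a]`. -/
structure IsSubordinatorFamily (a b C : ℝ) (f : ℝ → ℝ → ℝ) : Prop where
  nonneg : 0 ≤ C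
  measurable : Measurable (Function.uncurry f)
  eq_zero : ∀ p t, t ≤ 0 → f p t = 0
  le_small : ∀ p t, 0 < p → 0 < t → |f p t| ≤ C * (p * (t ^ (-1 - a) + t ^ (-1 - b)))
  le_mid : ∀ p t, 0 < p → 0 < t → |f p t| ≤ C * t⁻¹
  le_large : ∀ p t, 0 < p → 0 < t → |f p t| ≤ C * (p⁻¹ * (t ^ (a - 1) + t ^ (b - 1)))
  integrable : ∀ p, 0 < p → Integrable (f p)
  integral_abs_le : ∀ p, 0 < p → ∫ t, |f p t| ≤ C
  integral_eq_one : ∀ p, 0 < p → ∫ t, f p t = 1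

theorem IsSubordinatorFamily.mono {a b C D : ℝ} {f : ℝ → ℝ → ℝ} (h : IsSubordinatorFamily a b C f)
    (hCD : C ≤ D) : IsSubordinatorFamily a b D f where
  nonneg := h.nonneg.trans hCD
  measurable := h.measurable
  eq_zero := h.eq_zero
  le_small p t hp ht := (h.le_small p t hp ht).trans (by gcongr)
  le_mid p t hp ht := (h.le_mid p t hp ht).trans (by gcongr)
  le_large p t hp ht := (h.le_large p t hp ht).trans (by gcongr)
  integrable := h.integrable
  integral_abs_le p hp := (h.integral_abs_le p hp).trans hCD
  integral_eq_one := h.integral_eq_one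

theorem rpow_le_rpow_add_rpow {t u v w : ℝ} (ht : 0 < t) (huv : u ≤ v) (hvw : v ≤ w) :
    t ^ v ≤ t ^ u + t ^ w := by
  rcases le_total t 1 with h | h
  · have := rpow_le_rpow_of_exponent_ge ht h huv
    have : 0 < t ^ w := by positivity
    linarith
  · have := rpow_le_rpow_of_exponent_le h hvw
    have : 0 < t ^ u := by positivity
    linarith

/-- The kernel `t⁻¹ W(-ℓ p t^{-α}; -α, 0)`, extended by zero to `t ≤ 0`. -/
noncomputable def wrightKernel (α ℓ p t : ℝ) : ℝ :=
  if 0 < t then t⁻¹ * wrightContour α (ℓ * p * t ^ (-α)) else 0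

theorem wrightKernel_eq_indicator (α ℓ p : ℝ) : wrightKernel α ℓ p =
    (Ioi (0:ℝ)).indicator fun t => t⁻¹ * wrightContour α (ℓ * p * t ^ (-α)) := by
  ext t
  simp [wrightKernel, indicator]

theorem exists_isSubordinatorFamily_wrightKernel {a b α ℓ : ℝ} (h0 : 0 < α) (h1 : α < 1)
    (hb : b ≤ α) (ha : α ≤ a) (hℓ : 0 < ℓ) :
    ∃ C, IsSubordinatorFamily a b C (wrightKernel α ℓ) := by
  obtain ⟨C, hC0, hC⟩ := exists_wrightContour_bound h0 h1
  set L := α⁻¹ * ∫ y in Ioi (0:ℝ), y⁻¹ * |wrightContour α y|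
  have hL : 0 ≤ L := mul_nonneg (by positivity)
    (setIntegral_nonneg measurableSet_Ioi fun y (hy : 0 < y) => by positivity)
  have hle : ∀ x, 0 ≤ x → x ≤ 1 + ℓ + ℓ⁻¹ → C * x ≤ C * (1 + ℓ + ℓ⁻¹) + L := fun x _ h => by
    have := mul_le_mul_of_nonneg_left h hC0
    linarith
  have hℓi : 0 < ℓ⁻¹ := by positivity
  refine ⟨C * (1 + ℓ + ℓ⁻¹) + L, ?_, ?_, ?_, ?_, ?_, ?_, ?_, ?_, ?_⟩
  · positivity
  · unfold wrightKernel Function.uncurry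
    have hm := measurable_wrightContour α
    refine Measurable.ite (measurableSet_lt measurable_const measurable_snd) ?_ measurable_const
    exact (measurable_snd.inv).mul (hm.comp (by fun_prop))
  · intro p t ht
    simp [wrightKernel, not_lt.2 ht]
  · intro p t hp ht
    rw [wrightKernel, if_pos ht, abs_mul, abs_of_pos (by positivity)]
    calc _ ≤ t⁻¹ * (C * (ℓ * p * t ^ (-α))) := by
          gcongr; exact (hC _ (by positivity)).2.1
      _ = C * ℓ * (p * t ^ (-1 - α)) := by
          rw [sub_eq_add_neg, rpow_add ht, rpow_neg_one]; ring
      _ ≤ (C * (1 + ℓ + ℓ⁻¹) + L) * (p * (t ^ (-1 - a) + t ^ (-1 - b))) := by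
          gcongr
          · exact hle ℓ hℓ.le (by linarith)
          · exact rpow_le_rpow_add_rpow ht (by linarith) (by linarith)
  · intro p t hp ht
    rw [wrightKernel, if_pos ht, abs_mul, abs_of_pos (by positivity), mul_comm]
    gcongr
    refine ((hC _ (by positivity)).1).trans ?_
    simpa using hle 1 zero_le_one (by linarith)
  · intro p t hp ht
    rw [wrightKernel, if_pos ht, abs_mul, abs_of_pos (by positivity)]
    calc _ ≤ t⁻¹ * (C * (ℓ * p * t ^ (-α))⁻¹) := by
          gcongr; exact (hC _ (by positivity)).2.2
      _ = C * ℓ⁻¹ * (p⁻¹ * t ^ (α - 1)) := by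
          rw [rpow_sub_one ht.ne', rpow_neg ht.le]; field_simp
      _ ≤ (C * (1 + ℓ + ℓ⁻¹) + L) * (p⁻¹ * (t ^ (a - 1) + t ^ (b - 1))) := by
          gcongr
          · exact hle _ hℓi.le (by linarith)
          · rw [add_comm]
            exact rpow_le_rpow_add_rpow ht (by linarith) (by linarith)
  · intro p hp
    rw [wrightKernel_eq_indicator, integrable_indicator_iff measurableSet_Ioi]
    exact integrableOn_inv_mul_comp_rpow h0 (mul_pos hℓ hp)
      (integrableOn_inv_mul_wrightContour h0 h1)
  · intro p hp
    have e : ∀ t, |wrightKernel α ℓ p t| = (Ioi (0:ℝ)).indicator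
        (fun t => t⁻¹ * |wrightContour α (ℓ * p * t ^ (-α))|) t := by
      intro t
      rw [wrightKernel_eq_indicator]
      by_cases ht : 0 < t
      · rw [indicator_of_mem (show t ∈ Ioi 0 from ht), indicator_of_mem (show t ∈ Ioi 0 from ht),
          abs_mul, abs_of_pos (by positivity)]
      · rw [indicator_of_notMem (show t ∉ Ioi 0 from ht),
          indicator_of_notMem (show t ∉ Ioi 0 from ht), abs_zero]
    simp_rw [e]
    rw [MeasureTheory.integral_indicator measurableSet_Ioi,
      integral_inv_mul_comp_rpow h0 (mul_pos hℓ hp) (fun y => |wrightContour α y|)]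
    have : 0 ≤ C * (1 + ℓ + ℓ⁻¹) := by positivity
    linarith
  · intro p hp
    rw [wrightKernel_eq_indicator, MeasureTheory.integral_indicator measurableSet_Ioi,
      integral_inv_mul_comp_rpow h0 (mul_pos hℓ hp), integral_inv_mul_wrightContour h0 h1,
      inv_mul_cancel₀ h0.ne']

theorem rpow_le_four_mul_rpow {t u e : ℝ} (ht : 0 < t) (hu : t / 2 ≤ u) (he : -2 ≤ e)
    (he0 : e ≤ 0) : u ^ e ≤ 4 * t ^ e := by
  calc u ^ e ≤ (t / 2) ^ e := rpow_le_rpow_of_nonpos (by positivity) hu he0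
    _ = 2 ^ (-e) * t ^ e := by
      rw [div_rpow ht.le two_pos.le, rpow_neg two_pos.le]; field_simp
    _ ≤ 2 ^ (2:ℝ) * t ^ e := by
      gcongr
      · norm_num
      · linarith
    _ = 4 * t ^ e := by norm_num

theorem abs_integral_mul_sub_le {f g : ℝ → ℝ} {B : ℝ → ℝ} {C t : ℝ} (hC : 0 ≤ C)
    (hf : Integrable f) (hg : Integrable g) (hf0 : ∀ τ ≤ 0, f τ = 0) (hg0 : ∀ τ ≤ 0, g τ = 0)
    (hfB : ∀ τ, 0 < τ → |f τ| ≤ C * B τ) (hgB : ∀ τ, 0 < τ → |g τ| ≤ C * B τ)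
    (hB0 : 0 ≤ B t) (hB : ∀ u, t / 2 ≤ u → B u ≤ 4 * B t) (hfC : ∫ τ, |f τ| ≤ C)
    (hgC : ∫ τ, |g τ| ≤ C) :
    |∫ τ, f τ * g (t - τ)| ≤ 8 * C ^ 2 * B t := by
  have hpt : ∀ τ, ‖f τ * g (t - τ)‖ ≤ C * (4 * B t) * (|f τ| + |g (t - τ)|) := by
    intro τ
    rw [norm_mul, Real.norm_eq_abs, Real.norm_eq_abs]
    by_cases h1 : 0 < τ
    swap
    · rw [hf0 τ (not_lt.1 h1), abs_zero, zero_mul]; positivity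
    by_cases h2 : 0 < t - τ
    swap
    · rw [hg0 _ (not_lt.1 h2), abs_zero, mul_zero]; positivity
    rcases le_total (t / 2) τ with h | h
    · have hf1 : |f τ| ≤ C * (4 * B t) :=
        (hfB τ h1).trans (mul_le_mul_of_nonneg_left (hB τ h) hC)
      calc _ ≤ C * (4 * B t) * |g (t - τ)| := by gcongr
        _ ≤ _ := by gcongr; linarith [abs_nonneg (f τ)]
    · have hg1 : |g (t - τ)| ≤ C * (4 * B t) :=
        (hgB _ h2).trans (mul_le_mul_of_nonneg_left (hB _ (by linarith)) hC)
      calc _ ≤ |f τ| * (C * (4 * B t)) := by gcongr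
        _ = C * (4 * B t) * |f τ| := mul_comm _ _
        _ ≤ _ := by gcongr; linarith [abs_nonneg (g (t - τ))]
  have hi : Integrable fun τ => C * (4 * B t) * (|f τ| + |g (t - τ)|) :=
    (hf.abs.add (hg.comp_sub_left t).abs).const_mul _
  have := norm_integral_le_of_norm_le hi (ae_of_all _ hpt)
  rw [Real.norm_eq_abs] at this
  refine this.trans ?_
  rw [MeasureTheory.integral_const_mul, MeasureTheory.integral_add hf.abs (hg.comp_sub_left t).abs,
    integral_sub_left_eq_self (fun τ => |g τ|) volume t]
  calc _ ≤ C * (4 * B t) * (C + C) := by gcongr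
    _ = _ := by ring

theorem IsSubordinatorFamily.convolution {a b C : ℝ} {f g : ℝ → ℝ → ℝ} (hb : 0 < b)
    (hba : b ≤ a) (ha : a < 1) (hf : IsSubordinatorFamily a b C f)
    (hg : IsSubordinatorFamily a b C g) :
    IsSubordinatorFamily a b (8 * C ^ 2) (fun p t => ∫ τ, f p τ * g p (t - τ)) := by
  have hconv : ∀ p, (fun t => ∫ τ, f p τ * g p (t - τ)) =
      MeasureTheory.convolution (f p) (g p) (ContinuousLinearMap.mul ℝ ℝ) volume := by
    intro p; ext t; rfl
  have hrp : ∀ {t u e : ℝ}, 0 < t → t / 2 ≤ u → -2 ≤ e → e ≤ 0 → u ^ e ≤ 4 * t ^ e :=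
    fun h1 h2 h3 h4 => rpow_le_four_mul_rpow h1 h2 h3 h4
  refine ⟨by positivity, ?_, ?_, ?_, ?_, ?_, ?_, ?_, ?_⟩
  · have h : Measurable fun q : (ℝ × ℝ) × ℝ => f q.1.1 q.2 * g q.1.1 (q.1.2 - q.2) :=
      (hf.measurable.comp (measurable_fst.fst.prodMk measurable_snd)).mul
        (hg.measurable.comp (measurable_fst.fst.prodMk (measurable_fst.snd.sub measurable_snd)))
    exact (h.stronglyMeasurable.integral_prod_right' (ν := volume)).measurable
  · intro p t ht
    have : ∀ τ, f p τ * g p (t - τ) = 0 := fun τ => by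
      rcases le_total τ 0 with h | h
      · rw [hf.eq_zero p τ h, zero_mul]
      · rw [hg.eq_zero p _ (by linarith), mul_zero]
    simp [this]
  · intro p t hp ht
    refine abs_integral_mul_sub_le (B := fun t => p * (t ^ (-1 - a) + t ^ (-1 - b))) hf.nonneg
      (hf.integrable p hp) (hg.integrable p hp) (hf.eq_zero p) (hg.eq_zero p)
      (fun τ => hf.le_small p τ hp) (fun τ => hg.le_small p τ hp) (by positivity) (fun u hu => ?_)
      (hf.integral_abs_le p hp) (hg.integral_abs_le p hp)
    have h1 := hrp (e := -1 - a) ht hu (by linarith) (by linarith)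
    have h2 := hrp (e := -1 - b) ht hu (by linarith) (by linarith)
    rw [mul_left_comm]
    gcongr
    linarith
  · intro p t hp ht
    refine abs_integral_mul_sub_le (B := fun t => t⁻¹) hf.nonneg
      (hf.integrable p hp) (hg.integrable p hp) (hf.eq_zero p) (hg.eq_zero p)
      (fun τ => hf.le_mid p τ hp) (fun τ => hg.le_mid p τ hp) (by positivity) (fun u hu => ?_)
      (hf.integral_abs_le p hp) (hg.integral_abs_le p hp)
    have h1 := hrp (e := -1) ht hu (by linarith) (by linarith)
    simpa [rpow_neg_one] using h1
  · intro p t hp ht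
    refine abs_integral_mul_sub_le (B := fun t => p⁻¹ * (t ^ (a - 1) + t ^ (b - 1))) hf.nonneg
      (hf.integrable p hp) (hg.integrable p hp) (hf.eq_zero p) (hg.eq_zero p)
      (fun τ => hf.le_large p τ hp) (fun τ => hg.le_large p τ hp) (by positivity) (fun u hu => ?_)
      (hf.integral_abs_le p hp) (hg.integral_abs_le p hp)
    have h1 := hrp (e := a - 1) ht hu (by linarith) (by linarith)
    have h2 := hrp (e := b - 1) ht hu (by linarith) (by linarith)
    rw [mul_left_comm]
    gcongr
    linarith
  · intro p hp
    rw [hconv]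
    exact (hf.integrable p hp).integrable_convolution _ (hg.integrable p hp)
  · intro p hp
    have hci := (hf.integrable p hp).abs.integrable_convolution (ContinuousLinearMap.mul ℝ ℝ)
      (hg.integrable p hp).abs
    have h := integral_convolution (μ := volume) (ν := volume) (ContinuousLinearMap.mul ℝ ℝ)
      (hf.integrable p hp).abs (hg.integrable p hp).abs
    have hle : ∫ t, |∫ τ, f p τ * g p (t - τ)| ≤ ∫ t, MeasureTheory.convolution
        (fun t => |f p t|) (fun t => |g p t|) (ContinuousLinearMap.mul ℝ ℝ) volume t := by
      refine integral_mono_of_nonneg (ae_of_all _ fun t => abs_nonneg _) hci (ae_of_all _ fun t => ?_)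
      refine (MeasureTheory.abs_integral_le_integral_abs).trans (le_of_eq ?_)
      simp_rw [abs_mul]
      rfl
    refine hle.trans ?_
    rw [h, ContinuousLinearMap.mul_apply']
    have h1 := hf.integral_abs_le p hp
    have h2 := hg.integral_abs_le p hp
    have h3 : 0 ≤ ∫ t, |f p t| := integral_nonneg fun _ => abs_nonneg _
    have h4 : 0 ≤ ∫ t, |g p t| := integral_nonneg fun _ => abs_nonneg _
    nlinarith [hf.nonneg, mul_le_mul h1 h2 h4 hf.nonneg]
  · intro p hp
    rw [hconv, integral_convolution _ (hf.integrable p hp) (hg.integrable p hp),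
      hf.integral_eq_one p hp, hg.integral_eq_one p hp]
    simp

theorem Sconv_zero_succ (n : ℕ) (α ℓ : Fin (n + 2) → ℝ) :
    Sconv (n + 1) 0 α ℓ = laplaceConv (Sconv n 0 (fun j => α j.castSucc) (fun j => ℓ j.castSucc))
      (fun t => t ^ (-1 : ℝ) * wrightW (α (Fin.last (n + 1))) 0
        (-(ℓ (Fin.last (n + 1))) * t ^ (-(α (Fin.last (n + 1)))))) := by
  simp [Sconv, iterConv]

theorem wrightKernel_of_pos {α ℓ p t : ℝ} (h0 : 0 < α) (h1 : α < 1) (hℓ : 0 < ℓ) (hp : 0 < p)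
    (ht : 0 < t) :
    t ^ (-1 : ℝ) * wrightW α 0 (-(ℓ * p) * t ^ (-α)) = wrightKernel α ℓ p t := by
  rw [wrightKernel, if_pos ht, rpow_neg_one, neg_mul, wrightW_zero_neg h0 h1 (by positivity)]

theorem exists_isSubordinatorFamily_Sconv {a b : ℝ} (hb : 0 < b) (hba : b ≤ a) (ha : a < 1)
    (n : ℕ) (α lam : Fin (n + 1) → ℝ) (hαb : ∀ j, b ≤ α j) (hαa : ∀ j, α j ≤ a)
    (hlam : ∀ j, 0 < lam j) :
    ∃ C f, IsSubordinatorFamily a b C f ∧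
      ∀ p t, 0 < p → 0 < t → Sconv n 0 α (fun j => lam j * p) t = f p t := by
  induction n with
  | zero =>
    have h0 : 0 < α 0 := hb.trans_le (hαb 0)
    have h1 : α 0 < 1 := (hαa 0).trans_lt ha
    obtain ⟨C, hC⟩ := exists_isSubordinatorFamily_wrightKernel h0 h1 (hαb 0) (hαa 0) (hlam 0)
    refine ⟨C, _, hC, fun p t hp ht => ?_⟩
    rw [← wrightKernel_of_pos h0 h1 (hlam 0) hp ht]
    simp [Sconv, iterConv]
  | succ n ih =>
    obtain ⟨C, f, hf, hfS⟩ := ih (fun j => α j.castSucc) (fun j => lam j.castSucc)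
      (fun j => hαb _) (fun j => hαa _) (fun j => hlam _)
    set l := Fin.last (n + 1)
    have h0 : 0 < α l := hb.trans_le (hαb l)
    have h1 : α l < 1 := (hαa l).trans_lt ha
    obtain ⟨D, hD⟩ := exists_isSubordinatorFamily_wrightKernel h0 h1 (hαb l) (hαa l) (hlam l)
    refine ⟨_, _, (hf.mono (le_max_left C D)).convolution hb hba ha (hD.mono (le_max_right C D)),
      fun p t hp ht => ?_⟩
    rw [Sconv_zero_succ, laplaceConv, intervalIntegral.integral_of_le ht.le,
      integral_Ioc_eq_integral_Ioo, ← MeasureTheory.integral_indicator measurableSet_Ioo]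
    refine integral_congr_ae (ae_of_all _ fun τ => ?_)
    simp only
    by_cases hτ : τ ∈ Ioo 0 t
    · rw [indicator_of_mem hτ, hfS p τ hp hτ.1,
        wrightKernel_of_pos h0 h1 (hlam l) hp (sub_pos.2 hτ.2)]
    · rw [indicator_of_notMem hτ]
      by_cases h : 0 < τ
      · rw [hD.eq_zero p (t - τ) (by
          by_contra h2
          exact hτ ⟨h, by linarith⟩), mul_zero]
      · rw [hf.eq_zero p τ (not_lt.1 h), zero_mul]

/-- The scalar estimate behind the short-time bounds for `E` and its derivative. -/
theorem integrableOn_rpow_mul_of_le {g : ℝ → ℝ} {X Y : ℝ} (hX : 0 < X) (hY : 0 < Y)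
    (hg : Measurable g) (h1 : ∀ p, 0 < p → |g p| ≤ p * X) (h2 : ∀ p, 0 < p → |g p| ≤ Y) :
    IntegrableOn (fun p => p ^ (-(3/2) : ℝ) * g p) (Ioi 0) ∧
      ∫ p in Ioi (0:ℝ), |p ^ (-(3/2) : ℝ) * g p| ≤ 4 * √(X * Y) := by
  set A := Y / X with hA
  have hA0 : 0 < A := by positivity
  have hm : Measurable fun p : ℝ => p ^ (-(3/2) : ℝ) * g p := by fun_prop
  have i1 : IntegrableOn (fun p : ℝ => X * p ^ (-(1/2) : ℝ)) (Ioc 0 A) :=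
    ((intervalIntegrable_iff_integrableOn_Ioc_of_le hA0.le).1
      (intervalIntegral.intervalIntegrable_rpow' (by norm_num))).const_mul _
  have i2 : IntegrableOn (fun p : ℝ => Y * p ^ (-(3/2) : ℝ)) (Ioi A) :=
    (integrableOn_Ioi_rpow_of_lt (by norm_num) hA0).const_mul _
  have b1 : ∀ p ∈ Ioc 0 A, |p ^ (-(3/2) : ℝ) * g p| ≤ X * p ^ (-(1/2) : ℝ) := by
    intro p hp
    have e : p ^ (-(1/2) : ℝ) = p ^ (-(3/2) : ℝ) * p := by
      rw [← rpow_add_one hp.1.ne']; norm_num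
    rw [abs_mul, abs_of_pos (rpow_pos_of_pos hp.1 _), e]
    have := h1 p hp.1
    have := rpow_pos_of_pos hp.1 (-(3/2) : ℝ)
    calc p ^ (-(3/2) : ℝ) * |g p| ≤ p ^ (-(3/2) : ℝ) * (p * X) := by gcongr
      _ = _ := by ring
  have b2 : ∀ p ∈ Ioi A, |p ^ (-(3/2) : ℝ) * g p| ≤ Y * p ^ (-(3/2) : ℝ) := by
    intro p hp
    have hp0 : 0 < p := hA0.trans hp
    rw [abs_mul, abs_of_pos (rpow_pos_of_pos hp0 _), mul_comm]
    have := h2 p hp0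
    have := rpow_pos_of_pos hp0 (-(3/2) : ℝ)
    gcongr
  have j1 : IntegrableOn (fun p => p ^ (-(3/2) : ℝ) * g p) (Ioc 0 A) :=
    i1.mono' hm.aestronglyMeasurable
      ((ae_restrict_mem measurableSet_Ioc).mono fun p hp => b1 p hp)
  have j2 : IntegrableOn (fun p => p ^ (-(3/2) : ℝ) * g p) (Ioi A) :=
    i2.mono' hm.aestronglyMeasurable
      ((ae_restrict_mem measurableSet_Ioi).mono fun p hp => b2 p hp)
  have hU : Ioi (0:ℝ) = Ioc 0 A ∪ Ioi A := (Ioc_union_Ioi_eq_Ioi hA0.le).symm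
  refine ⟨hU ▸ j1.union j2, ?_⟩
  rw [hU, setIntegral_union (Ioc_disjoint_Ioi le_rfl) measurableSet_Ioi j1.abs j2.abs]
  have v1 : ∫ p in Ioc 0 A, X * p ^ (-(1/2) : ℝ) = 2 * √(X * Y) := by
    rw [MeasureTheory.integral_const_mul, ← intervalIntegral.integral_of_le hA0.le,
      integral_rpow (Or.inl (by norm_num))]
    norm_num
    rw [← sqrt_eq_rpow, hA, sqrt_div' _ hX.le, sqrt_mul hX.le]
    field_simp
    rw [sq_sqrt hX.le]
  have v2 : ∫ p in Ioi A, Y * p ^ (-(3/2) : ℝ) = 2 * √(X * Y) := by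
    rw [MeasureTheory.integral_const_mul, integral_Ioi_rpow_of_lt (by norm_num) hA0]
    norm_num
    rw [rpow_neg hA0.le, ← sqrt_eq_rpow, hA, sqrt_div' _ hX.le, sqrt_mul hX.le]
    field_simp
    rw [sq_sqrt hY.le]
  have l1 := setIntegral_mono_on j1.abs i1 measurableSet_Ioc b1
  have l2 := setIntegral_mono_on j2.abs i2 measurableSet_Ioi b2
  linarith

theorem integral_rpow_mul_exp_neg_div (c : ℝ) :
    ∫ p in Ioi (0:ℝ), p ^ (-(3/2) : ℝ) * Real.exp (-c / p) = √(π / c) := by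
  have h := MeasureTheory.integral_comp_rpow_Ioi (fun y : ℝ => Real.exp (-c * y ^ 2))
    (p := (-(1/2) : ℝ)) (by norm_num)
  rw [integral_gaussian_Ioi] at h
  have e : ∀ p ∈ Ioi (0:ℝ), (|(-(1/2) : ℝ)| * p ^ ((-(1/2) : ℝ) - 1)) •
      Real.exp (-c * (p ^ (-(1/2) : ℝ)) ^ 2) = 2⁻¹ * (p ^ (-(3/2) : ℝ) * Real.exp (-c / p)) := by
    intro p hp
    rw [← rpow_mul_natCast (le_of_lt hp), smul_eq_mul]
    norm_num
    rw [rpow_neg_one, ← div_eq_mul_inv, ← neg_div]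
    ring_nf
  rw [setIntegral_congr_fun measurableSet_Ioi e, MeasureTheory.integral_const_mul] at h
  linarith

theorem integrableOn_rpow_mul_exp_neg_div {c : ℝ} (hc : 0 < c) :
    IntegrableOn (fun p : ℝ => p ^ (-(3/2) : ℝ) * Real.exp (-c / p)) (Ioi 0) := by
  by_contra h
  have := integral_rpow_mul_exp_neg_div c
  rw [integral_undef h] at this
  have : 0 < √(π / c) := by positivity
  linarith

/-- `-(x/2) exp(-x²/(4p))`. -/
noncomputable def dipole (x p : ℝ) : ℝ := -(x / 2) * Real.exp (-x ^ 2 / (4 * p))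

theorem abs_dipole (x p : ℝ) : |dipole x p| = |x| / 2 * Real.exp (-x ^ 2 / (4 * p)) := by
  rw [dipole, abs_mul, abs_neg, abs_div, abs_two, abs_of_pos (Real.exp_pos _)]

theorem exp_neg_sq_le_one {x p : ℝ} (hp : 0 < p) : Real.exp (-x ^ 2 / (4 * p)) ≤ 1 := by
  rw [Real.exp_le_one_iff, neg_div]
  have : 0 ≤ x ^ 2 / (4 * p) := by positivity
  linarith

theorem abs_dipole_sub_le {p : ℝ} (hp : 0 < p) (x y : ℝ) :
    |dipole x p - dipole y p| ≤ 2 * |x - y| := by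
  have hd : ∀ z : ℝ, HasDerivAt (fun z => dipole z p)
      (-(1 / 2) * Real.exp (-z ^ 2 / (4 * p)) +
        -(z / 2) * (Real.exp (-z ^ 2 / (4 * p)) * (-(2 * z) / (4 * p)))) z := by
    intro z
    have h1 : HasDerivAt (fun z : ℝ => -(z / 2)) (-(1 / 2)) z :=
      ((hasDerivAt_id z).div_const 2).neg
    have h2 : HasDerivAt (fun z : ℝ => -z ^ 2 / (4 * p)) (-(2 * z) / (4 * p)) z := by
      simpa using ((hasDerivAt_pow 2 z).neg).div_const (4 * p)
    exact h1.mul h2.exp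
  have := Convex.norm_image_sub_le_of_norm_hasDerivWithin_le (s := univ) (C := 2)
    (x := y) (y := x) (fun z _ => (hd z).hasDerivWithinAt) ?_ convex_univ (mem_univ _) (mem_univ _)
  · simpa using this
  intro z _
  set u := z ^ 2 / (4 * p) with hu
  have hu0 : 0 ≤ u := by positivity
  have e : -(1 / 2) * Real.exp (-z ^ 2 / (4 * p)) +
        -(z / 2) * (Real.exp (-z ^ 2 / (4 * p)) * (-(2 * z) / (4 * p)))
      = (u - 1 / 2) * Real.exp (-u) := by
    rw [neg_div, ← hu]
    have : -(z / 2) * (-(2 * z) / (4 * p)) = u := by rw [hu]; field_simp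
    linear_combination Real.exp (-u) * this
  rw [e, Real.norm_eq_abs, abs_mul, abs_of_pos (Real.exp_pos _)]
  have h1 : Real.exp (-u) ≤ 1 := Real.exp_le_one_iff.2 (by linarith)
  have h2 : u * Real.exp (-u) ≤ 1 := by
    rcases hu0.eq_or_lt with h | h
    · rw [← h]; simp
    · calc u * Real.exp (-u) ≤ u * u⁻¹ := by gcongr; exact exp_neg_le_inv h
        _ = 1 := mul_inv_cancel₀ h.ne'
  have h3 : |u - 1 / 2| ≤ u + 1 / 2 := by rw [abs_le]; constructor <;> linarith
  calc |u - 1 / 2| * Real.exp (-u) ≤ (u + 1 / 2) * Real.exp (-u) := by gcongr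
    _ ≤ 2 := by linarith

/-- The properties of the kernel `K = E_x` that produce the jump relation. -/
structure IsJumpKernel (a b C : ℝ) (E K : ℝ → ℝ → ℝ) : Prop where
  nonneg : 0 ≤ C
  measurable_left : Measurable (Function.uncurry E)
  measurable_right : Measurable (Function.uncurry K)
  hasDerivAt : ∀ x t, 0 < t → HasDerivAt (fun y => E y t) (K x t) x
  abs_le : ∀ x t, 0 < t → |E x t| ≤ C * (t ^ (a / 2 - 1) + t ^ (b / 2 - 1))
  abs_sub_le : ∀ x y t, 0 < t →
    |K x t - K y t| ≤ C * |x - y| * (t ^ (-1 - a / 2) + t ^ (-1 - b / 2))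
  zero_left : ∀ t, K 0 t = 0
  abs_le_of_ne : ∀ x t, x ≠ 0 → 0 < t → |K x t| ≤ C * (x ^ 2)⁻¹ * (t ^ (a - 1) + t ^ (b - 1))
  integrableOn : ∀ x, x ≠ 0 → IntegrableOn (K x) (Ioi 0)
  integral_abs_le : ∀ x, x ≠ 0 → ∫ t in Ioi (0:ℝ), |K x t| ≤ C
  integral_of_pos : ∀ x, 0 < x → ∫ t in Ioi (0:ℝ), K x t = -(1 / 2)
  integral_of_neg : ∀ x, x < 0 → ∫ t in Ioi (0:ℝ), K x t = 1 / 2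

section

variable {a b C : ℝ} {f : ℝ → ℝ → ℝ}

theorem IsSubordinatorFamily.one_le (h : IsSubordinatorFamily a b C f) : 1 ≤ C := by
  rw [← h.integral_eq_one 1 one_pos]
  exact (le_abs_self _).trans
    ((MeasureTheory.abs_integral_le_integral_abs).trans (h.integral_abs_le 1 one_pos))

theorem IsSubordinatorFamily.integrableOn_deriv_weight (h : IsSubordinatorFamily a b C f) {t : ℝ}
    (ht : 0 < t) : IntegrableOn (fun p => p ^ (-(3/2) : ℝ) * f p t) (Ioi 0) ∧
      ∫ p in Ioi (0:ℝ), |p ^ (-(3/2) : ℝ) * f p t|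
        ≤ 4 * C * (t ^ (-1 - a / 2) + t ^ (-1 - b / 2)) := by
  have hC : 0 < C := one_pos.trans_le h.one_le
  have hA := rpow_pos_of_pos ht (-1 - a)
  have hB := rpow_pos_of_pos ht (-1 - b)
  have hm : Measurable fun p => f p t := h.measurable.comp (measurable_id.prodMk measurable_const)
  obtain ⟨h1, h2⟩ := integrableOn_rpow_mul_of_le (X := C * (t ^ (-1 - a) + t ^ (-1 - b)))
    (Y := C * t⁻¹) (by positivity) (by positivity) hm
    (fun p hp => (h.le_small p t hp ht).trans (le_of_eq (by ring))) (fun p hp => h.le_mid p t hp ht)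
  refine ⟨h1, h2.trans ?_⟩
  have hA' := rpow_pos_of_pos ht (-1 - a / 2)
  have hB' := rpow_pos_of_pos ht (-1 - b / 2)
  rw [mul_assoc 4 C]
  refine mul_le_mul_of_nonneg_left ?_ (by norm_num)
  refine Real.sqrt_le_iff.2 ⟨by positivity, ?_⟩
  have e1 : t ^ (-1 - a) * t⁻¹ = (t ^ (-1 - a / 2)) ^ 2 := by
    rw [← rpow_neg_one, ← rpow_add ht, ← rpow_mul_natCast ht.le]; ring_nf
  have e2 : t ^ (-1 - b) * t⁻¹ = (t ^ (-1 - b / 2)) ^ 2 := by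
    rw [← rpow_neg_one, ← rpow_add ht, ← rpow_mul_natCast ht.le]; ring_nf
  calc C * (t ^ (-1 - a) + t ^ (-1 - b)) * (C * t⁻¹)
      = C ^ 2 * (t ^ (-1 - a) * t⁻¹ + t ^ (-1 - b) * t⁻¹) := by ring
    _ = C ^ 2 * ((t ^ (-1 - a / 2)) ^ 2 + (t ^ (-1 - b / 2)) ^ 2) := by rw [e1, e2]
    _ ≤ (C * (t ^ (-1 - a / 2) + t ^ (-1 - b / 2))) ^ 2 := by
      rw [mul_pow]; gcongr; nlinarith

theorem IsSubordinatorFamily.integrableOn_weight (h : IsSubordinatorFamily a b C f) {t : ℝ}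
    (ht : 0 < t) : IntegrableOn (fun p => p ^ (-(1/2) : ℝ) * f p t) (Ioi 0) ∧
      ∫ p in Ioi (0:ℝ), |p ^ (-(1/2) : ℝ) * f p t|
        ≤ 4 * C * (t ^ (a / 2 - 1) + t ^ (b / 2 - 1)) := by
  have hC : 0 < C := one_pos.trans_le h.one_le
  have hA := rpow_pos_of_pos ht (a - 1)
  have hB := rpow_pos_of_pos ht (b - 1)
  have hm : Measurable fun p => p * f p t :=
    measurable_id.mul (h.measurable.comp (measurable_id.prodMk measurable_const))
  obtain ⟨h1, h2⟩ := integrableOn_rpow_mul_of_le (X := C * t⁻¹)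
    (Y := C * (t ^ (a - 1) + t ^ (b - 1))) (by positivity) (by positivity) hm
    (fun p hp => by
      rw [abs_mul, abs_of_pos hp]
      exact mul_le_mul_of_nonneg_left (h.le_mid p t hp ht) hp.le)
    (fun p hp => by
      rw [abs_mul, abs_of_pos hp]
      calc p * |f p t| ≤ p * (C * (p⁻¹ * (t ^ (a - 1) + t ^ (b - 1)))) :=
            mul_le_mul_of_nonneg_left (h.le_large p t hp ht) hp.le
        _ = _ := by field_simp)
  have e : ∀ p ∈ Ioi (0:ℝ), p ^ (-(3/2) : ℝ) * (p * f p t) = p ^ (-(1/2) : ℝ) * f p t := by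
    intro p hp
    rw [← mul_assoc, ← rpow_add_one (ne_of_gt hp)]; norm_num
  rw [integrableOn_congr_fun e measurableSet_Ioi] at h1
  rw [setIntegral_congr_fun measurableSet_Ioi fun p hp => congrArg abs (e p hp)] at h2
  refine ⟨h1, h2.trans ?_⟩
  have hA' := rpow_pos_of_pos ht (a / 2 - 1)
  have hB' := rpow_pos_of_pos ht (b / 2 - 1)
  rw [mul_assoc 4 C]
  refine mul_le_mul_of_nonneg_left ?_ (by norm_num)
  refine Real.sqrt_le_iff.2 ⟨by positivity, ?_⟩
  have e1 : t ^ (a - 1) * t⁻¹ = (t ^ (a / 2 - 1)) ^ 2 := by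
    rw [← rpow_neg_one, ← rpow_add ht, ← rpow_mul_natCast ht.le]; ring_nf
  have e2 : t ^ (b - 1) * t⁻¹ = (t ^ (b / 2 - 1)) ^ 2 := by
    rw [← rpow_neg_one, ← rpow_add ht, ← rpow_mul_natCast ht.le]; ring_nf
  calc C * t⁻¹ * (C * (t ^ (a - 1) + t ^ (b - 1)))
      = C ^ 2 * (t ^ (a - 1) * t⁻¹ + t ^ (b - 1) * t⁻¹) := by ring
    _ = C ^ 2 * ((t ^ (a / 2 - 1)) ^ 2 + (t ^ (b / 2 - 1)) ^ 2) := by rw [e1, e2]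
    _ ≤ (C * (t ^ (a / 2 - 1) + t ^ (b / 2 - 1))) ^ 2 := by
      rw [mul_pow]; gcongr; nlinarith

end

theorem heat_const_mul_sqrt_pi : (4 * π) ^ (-(1/2) : ℝ) * √π = 1 / 2 := by
  rw [rpow_neg (by positivity), ← sqrt_eq_rpow, sqrt_mul (by norm_num),
    show (4:ℝ) = 2 ^ 2 by norm_num, sqrt_sq (by norm_num)]
  have : 0 < √π := by positivity
  field_simp

theorem heat_const_pos : 0 < (4 * π) ^ (-(1/2) : ℝ) := by positivity

theorem heat_const_le_one : (4 * π) ^ (-(1/2) : ℝ) ≤ 1 := by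
  have := Real.pi_gt_three
  exact rpow_le_one_of_one_le_of_nonpos (by linarith) (by norm_num)

theorem integrableOn_heat_weight {x : ℝ} (hx : x ≠ 0) :
    IntegrableOn (fun p : ℝ => p ^ (-(3/2) : ℝ) * Real.exp (-x ^ 2 / (4 * p))) (Ioi 0) := by
  refine (integrableOn_rpow_mul_exp_neg_div (c := x ^ 2 / 4) (by positivity)).congr_fun
    (fun p _ => ?_) measurableSet_Ioi
  simp only
  congr 2
  rw [← neg_div, div_div]

theorem integral_heat_weight {x : ℝ} (hx : x ≠ 0) :
    ∫ p in Ioi (0:ℝ), p ^ (-(3/2) : ℝ) * Real.exp (-x ^ 2 / (4 * p)) = 2 * √π / |x| := by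
  have h := integral_rpow_mul_exp_neg_div (x ^ 2 / 4)
  have e : ∀ p : ℝ, -(x ^ 2 / 4) / p = -x ^ 2 / (4 * p) := fun p => by rw [← neg_div, div_div]
  simp_rw [e] at h
  rw [h, sqrt_div pi_pos.le, sqrt_div (sq_nonneg x), sqrt_sq_eq_abs,
    show (4:ℝ) = 2 ^ 2 by norm_num, sqrt_sq (by norm_num)]
  have := abs_pos.2 hx
  field_simp

/-- The kernel `E` built from the densities `f`. -/
noncomputable def subordE (f : ℝ → ℝ → ℝ) (x t : ℝ) : ℝ :=
  (4 * π) ^ (-(1/2) : ℝ) *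
    ∫ p in Ioi (0:ℝ), p ^ (-(1/2) : ℝ) * Real.exp (-(|x| ^ 2) / (4 * p)) * f p t

/-- The spatial derivative of `subordE f`. -/
noncomputable def subordK (f : ℝ → ℝ → ℝ) (x t : ℝ) : ℝ :=
  (4 * π) ^ (-(1/2) : ℝ) * ∫ p in Ioi (0:ℝ), dipole x p * (p ^ (-(3/2) : ℝ) * f p t)

theorem measurable_dipole (x : ℝ) : Measurable (dipole x) := by
  unfold dipole; fun_prop

theorem hasDerivAt_heat {p : ℝ} (hp : 0 < p) (c x : ℝ) :
    HasDerivAt (fun y => p ^ (-(1/2) : ℝ) * Real.exp (-(|y| ^ 2) / (4 * p)) * c)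
      (dipole x p * (p ^ (-(3/2) : ℝ) * c)) x := by
  have h2 : HasDerivAt (fun z : ℝ => -z ^ 2 / (4 * p)) (-(2 * x) / (4 * p)) x := by
    simpa using ((hasDerivAt_pow 2 x).neg).div_const (4 * p)
  have h := (h2.exp.const_mul (p ^ (-(1/2) : ℝ))).mul_const c
  simp_rw [sq_abs]
  refine h.congr_deriv ?_
  have e : p ^ (-(1/2) : ℝ) = p ^ (-(3/2) : ℝ) * p := by
    rw [← rpow_add_one hp.ne']; norm_num
  rw [e, dipole]
  field_simp
  ring

section

variable {a b C : ℝ} {f : ℝ → ℝ → ℝ}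

theorem measurable_subordE (hf : Measurable (Function.uncurry f)) :
    Measurable (Function.uncurry (subordE f)) := by
  have h1 : Measurable fun q : (ℝ × ℝ) × ℝ => f q.2 q.1.2 :=
    hf.comp (measurable_snd.prodMk (measurable_snd.comp measurable_fst))
  have : Measurable fun q : (ℝ × ℝ) × ℝ =>
      q.2 ^ (-(1/2) : ℝ) * Real.exp (-(|q.1.1| ^ 2) / (4 * q.2)) * f q.2 q.1.2 :=
    Measurable.mul (by fun_prop) h1
  exact (this.stronglyMeasurable.integral_prod_right'
    (ν := volume.restrict (Ioi (0:ℝ)))).measurable.const_mul _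

theorem measurable_subordK (hf : Measurable (Function.uncurry f)) :
    Measurable (Function.uncurry (subordK f)) := by
  have h1 : Measurable fun q : (ℝ × ℝ) × ℝ => f q.2 q.1.2 :=
    hf.comp (measurable_snd.prodMk (measurable_snd.comp measurable_fst))
  have : Measurable fun q : (ℝ × ℝ) × ℝ =>
      dipole q.1.1 q.2 * (q.2 ^ (-(3/2) : ℝ) * f q.2 q.1.2) := by
    unfold dipole
    exact Measurable.mul (by fun_prop) (Measurable.mul (by fun_prop) h1)
  exact (this.stronglyMeasurable.integral_prod_right'
    (ν := volume.restrict (Ioi (0:ℝ)))).measurable.const_mul _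

theorem IsSubordinatorFamily.integrableOn_dipole (h : IsSubordinatorFamily a b C f) {t : ℝ}
    (ht : 0 < t) (x : ℝ) :
    IntegrableOn (fun p => dipole x p * (p ^ (-(3/2) : ℝ) * f p t)) (Ioi 0) := by
  refine (h.integrableOn_deriv_weight ht).1.bdd_mul (c := |x| / 2)
    (measurable_dipole x).aestronglyMeasurable
    ((ae_restrict_mem measurableSet_Ioi).mono fun p hp => ?_)
  rw [Real.norm_eq_abs, abs_dipole]
  exact mul_le_of_le_one_right (by positivity) (exp_neg_sq_le_one hp)

theorem IsSubordinatorFamily.integrableOn_heat (h : IsSubordinatorFamily a b C f) {t : ℝ}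
    (ht : 0 < t) (x : ℝ) :
    IntegrableOn (fun p => p ^ (-(1/2) : ℝ) * Real.exp (-(|x| ^ 2) / (4 * p)) * f p t) (Ioi 0) := by
  have := (h.integrableOn_weight ht).1.bdd_mul (c := 1)
    (f := fun p => Real.exp (-(|x| ^ 2) / (4 * p)))
    (Measurable.aestronglyMeasurable (by fun_prop))
    ((ae_restrict_mem measurableSet_Ioi).mono fun p hp => by
      rw [Real.norm_eq_abs, abs_of_pos (Real.exp_pos _), sq_abs]
      exact exp_neg_sq_le_one hp)
  refine IntegrableOn.congr_fun this (fun p _ => ?_) measurableSet_Ioi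
  ring

theorem IsSubordinatorFamily.abs_subordE_le (h : IsSubordinatorFamily a b C f) (x : ℝ) {t : ℝ}
    (ht : 0 < t) : |subordE f x t| ≤ 4 * C * (t ^ (a / 2 - 1) + t ^ (b / 2 - 1)) := by
  have hw := h.integrableOn_weight ht
  refine le_trans ?_ hw.2
  rw [subordE, abs_mul, abs_of_pos heat_const_pos]
  refine (mul_le_of_le_one_left (abs_nonneg _) heat_const_le_one).trans
    ((MeasureTheory.abs_integral_le_integral_abs).trans ?_)
  refine setIntegral_mono_on (h.integrableOn_heat ht x).abs hw.1.abs measurableSet_Ioi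
    fun p hp => ?_
  rw [mul_right_comm, abs_mul]
  refine mul_le_of_le_one_right (abs_nonneg _) ?_
  rw [abs_of_pos (Real.exp_pos _), sq_abs]
  exact exp_neg_sq_le_one hp

theorem IsSubordinatorFamily.abs_subordK_sub_le (h : IsSubordinatorFamily a b C f) (x y : ℝ)
    {t : ℝ} (ht : 0 < t) : |subordK f x t - subordK f y t| ≤
      8 * C * |x - y| * (t ^ (-1 - a / 2) + t ^ (-1 - b / 2)) := by
  have hw := h.integrableOn_deriv_weight ht
  have ix := h.integrableOn_dipole ht x
  have iy := h.integrableOn_dipole ht y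
  rw [subordK, subordK, ← mul_sub, ← MeasureTheory.integral_sub ix iy, abs_mul,
    abs_of_pos heat_const_pos]
  calc _ ≤ |∫ p in Ioi (0:ℝ), dipole x p * (p ^ (-(3/2) : ℝ) * f p t) -
          dipole y p * (p ^ (-(3/2) : ℝ) * f p t)| :=
        mul_le_of_le_one_left (abs_nonneg _) heat_const_le_one
    _ ≤ ∫ p in Ioi (0:ℝ), |dipole x p * (p ^ (-(3/2) : ℝ) * f p t) -
          dipole y p * (p ^ (-(3/2) : ℝ) * f p t)| := MeasureTheory.abs_integral_le_integral_abs
    _ ≤ ∫ p in Ioi (0:ℝ), (2 * |x - y|) * |p ^ (-(3/2) : ℝ) * f p t| := by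
      refine setIntegral_mono_on (ix.sub iy).abs (hw.1.abs.const_mul _) measurableSet_Ioi
        fun p hp => ?_
      rw [← sub_mul, abs_mul]
      gcongr
      exact abs_dipole_sub_le hp x y
    _ ≤ (2 * |x - y|) * (4 * C * (t ^ (-1 - a / 2) + t ^ (-1 - b / 2))) := by
      rw [MeasureTheory.integral_const_mul]
      gcongr
      exact hw.2
    _ = _ := by ring

theorem IsSubordinatorFamily.hasDerivAt_subordE (h : IsSubordinatorFamily a b C f) (x : ℝ)
    {t : ℝ} (ht : 0 < t) : HasDerivAt (fun y => subordE f y t) (subordK f x t) x := by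
  have hw := h.integrableOn_deriv_weight ht
  refine (hasDerivAt_integral_of_dominated_loc_of_deriv_le (μ := volume.restrict (Ioi (0:ℝ)))
    (s := Metric.ball x 1)
    (F := fun y p => p ^ (-(1/2) : ℝ) * Real.exp (-(|y| ^ 2) / (4 * p)) * f p t)
    (F' := fun y p => dipole y p * (p ^ (-(3/2) : ℝ) * f p t))
    (bound := fun p => (|x| + 1) / 2 * |p ^ (-(3/2) : ℝ) * f p t|)
    (Metric.ball_mem_nhds x one_pos)
    (Eventually.of_forall fun y => (h.integrableOn_heat ht y).aestronglyMeasurable)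
    (h.integrableOn_heat ht x) (h.integrableOn_dipole ht x).aestronglyMeasurable
    ((ae_restrict_mem measurableSet_Ioi).mono fun p hp y hy => ?_) (hw.1.abs.const_mul _)
    ((ae_restrict_mem measurableSet_Ioi).mono fun p hp y _ => hasDerivAt_heat hp _ y)).2.const_mul _
  rw [Real.norm_eq_abs, abs_mul, abs_dipole]
  have hy' : |y| ≤ |x| + 1 := by
    have h1 : |y - x| < 1 := by simpa [Real.dist_eq] using hy
    have h2 := abs_add_le (y - x) x
    rw [sub_add_cancel] at h2
    linarith
  have := exp_neg_sq_le_one (x := y) hp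
  gcongr
  calc |y| / 2 * Real.exp (-y ^ 2 / (4 * p)) ≤ |y| / 2 * 1 := by gcongr
    _ ≤ _ := by linarith

theorem IsSubordinatorFamily.abs_subordK_le (h : IsSubordinatorFamily a b C f) {x t : ℝ}
    (hx : x ≠ 0) (ht : 0 < t) :
    |subordK f x t| ≤ 24 * C * (x ^ 2)⁻¹ * (t ^ (a - 1) + t ^ (b - 1)) := by
  have hC := h.nonneg
  set ν := t ^ (a - 1) + t ^ (b - 1) with hν
  have hν0 : 0 < ν := add_pos (rpow_pos_of_pos ht _) (rpow_pos_of_pos ht _)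
  have hx0 := abs_pos.2 hx
  have hx2 : x ^ 2 = |x| ^ 2 := (sq_abs x).symm
  set z := x / √2 with hz
  have hz2 : z ^ 2 = x ^ 2 / 2 := by rw [hz, div_pow, sq_sqrt (by norm_num)]
  have hz0 : z ≠ 0 := div_ne_zero hx (by positivity)
  rw [subordK, abs_mul, abs_of_pos heat_const_pos]
  have key : ∀ p ∈ Ioi (0:ℝ), |dipole x p * (p ^ (-(3/2) : ℝ) * f p t)| ≤
      4 * C * ν / |x| * (p ^ (-(3/2) : ℝ) * Real.exp (-z ^ 2 / (4 * p))) := by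
    intro p hp
    have hp : 0 < p := hp
    have hp' := rpow_pos_of_pos hp (-(3/2) : ℝ)
    have hu : 0 < z ^ 2 / (4 * p) := by positivity
    have e : -x ^ 2 / (4 * p) = -(z ^ 2 / (4 * p)) + -z ^ 2 / (4 * p) := by rw [hz2]; ring
    have hl := h.le_large p t hp ht
    have hexp := exp_neg_le_inv hu
    rw [abs_mul, abs_mul, abs_dipole, abs_of_pos hp', e, Real.exp_add]
    calc _ ≤ |x| / 2 * ((z ^ 2 / (4 * p))⁻¹ * Real.exp (-z ^ 2 / (4 * p))) *
            (p ^ (-(3/2) : ℝ) * (C * (p⁻¹ * ν))) := by gcongr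
      _ = _ := by
        rw [hz2, hx2]
        field_simp
  have hi := (integrableOn_heat_weight hz0).const_mul (4 * C * ν / |x|)
  calc _ ≤ (4 * π) ^ (-(1/2) : ℝ) * (4 * C * ν / |x| * (2 * √π / |z|)) := by
        rw [← integral_heat_weight hz0, ← MeasureTheory.integral_const_mul]
        refine mul_le_mul_of_nonneg_left ((MeasureTheory.abs_integral_le_integral_abs).trans
          (setIntegral_mono_on (h.integrableOn_dipole ht x).abs hi measurableSet_Ioi key))
          heat_const_pos.le
    _ = ((4 * π) ^ (-(1/2) : ℝ) * √π) * (8 * C * ν * √2 * (x ^ 2)⁻¹) := by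
      rw [hz, hx2, abs_div, abs_of_pos (show 0 < √2 by positivity)]
      field_simp
      ring
    _ = 4 * √2 * (C * (x ^ 2)⁻¹ * ν) := by rw [heat_const_mul_sqrt_pi]; ring
    _ ≤ 24 * (C * (x ^ 2)⁻¹ * ν) := by
      have : √2 ≤ 2 := by rw [Real.sqrt_le_iff]; norm_num
      gcongr
      linarith
    _ = _ := by ring

theorem IsSubordinatorFamily.integrable_dipole_prod (h : IsSubordinatorFamily a b C f) {x : ℝ}
    (hx : x ≠ 0) :
    Integrable (fun q : ℝ × ℝ => dipole x q.1 * (q.1 ^ (-(3/2) : ℝ) * f q.1 q.2))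
      ((volume.restrict (Ioi 0)).prod (volume.restrict (Ioi 0))) ∧
    ∫ p in Ioi (0:ℝ), ∫ t in Ioi (0:ℝ), |dipole x p * (p ^ (-(3/2) : ℝ) * f p t)| ≤ C * √π := by
  have hC := h.nonneg
  have hm : Measurable fun q : ℝ × ℝ => dipole x q.1 * (q.1 ^ (-(3/2) : ℝ) * f q.1 q.2) :=
    ((measurable_dipole x).comp measurable_fst).mul (Measurable.mul (by fun_prop) h.measurable)
  have hw : IntegrableOn (fun p : ℝ => C * |x| / 2 *
      (p ^ (-(3/2) : ℝ) * Real.exp (-x ^ 2 / (4 * p)))) (Ioi 0) :=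
    (integrableOn_heat_weight hx).const_mul _
  have hinteg : ∀ p ∈ Ioi (0:ℝ), ∫ t in Ioi (0:ℝ), |dipole x p * (p ^ (-(3/2) : ℝ) * f p t)| ≤
      C * |x| / 2 * (p ^ (-(3/2) : ℝ) * Real.exp (-x ^ 2 / (4 * p))) := by
    intro p hp
    have hp' := rpow_pos_of_pos hp (-(3/2) : ℝ)
    simp_rw [abs_mul, MeasureTheory.integral_const_mul]
    rw [abs_dipole, abs_of_pos hp']
    have : ∫ t in Ioi (0:ℝ), |f p t| ≤ C :=
      (setIntegral_le_integral (h.integrable p hp).abs (ae_of_all _ fun _ => abs_nonneg _)).trans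
        (h.integral_abs_le p hp)
    calc _ ≤ |x| / 2 * Real.exp (-x ^ 2 / (4 * p)) * (p ^ (-(3/2) : ℝ) * C) := by gcongr
      _ = _ := by ring
  have hi : IntegrableOn (fun p => ∫ t in Ioi (0:ℝ), |dipole x p * (p ^ (-(3/2) : ℝ) * f p t)|)
      (Ioi 0) := by
    refine Integrable.mono' hw ?_ ((ae_restrict_mem measurableSet_Ioi).mono fun p hp => ?_)
    · exact (hm.abs.stronglyMeasurable.integral_prod_right'
        (ν := volume.restrict (Ioi (0:ℝ)))).aestronglyMeasurable
    · rw [Real.norm_eq_abs, abs_of_nonneg (integral_nonneg fun _ => abs_nonneg _)]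
      exact hinteg p hp
  refine ⟨(integrable_prod_iff hm.aestronglyMeasurable).2
    ⟨(ae_restrict_mem measurableSet_Ioi).mono fun p hp => by
      have : IntegrableOn (f p) (Ioi 0) := (h.integrable p hp).integrableOn
      exact (this.const_mul (p ^ (-(3/2) : ℝ))).const_mul (dipole x p),
      by simp only [Real.norm_eq_abs]; exact hi⟩, ?_⟩
  refine (setIntegral_mono_on hi hw measurableSet_Ioi hinteg).trans (le_of_eq ?_)
  rw [MeasureTheory.integral_const_mul, integral_heat_weight hx]
  have := abs_pos.2 hx
  field_simp

theorem IsSubordinatorFamily.integrableOn_subordK (h : IsSubordinatorFamily a b C f) {x : ℝ}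
    (hx : x ≠ 0) : IntegrableOn (subordK f x) (Ioi 0) :=
  (h.integrable_dipole_prod hx).1.integral_prod_right.const_mul _

theorem IsSubordinatorFamily.integral_abs_subordK_le (h : IsSubordinatorFamily a b C f) {x : ℝ}
    (hx : x ≠ 0) : ∫ t in Ioi (0:ℝ), |subordK f x t| ≤ C := by
  obtain ⟨h1, h2⟩ := h.integrable_dipole_prod hx
  have hC := h.nonneg
  calc ∫ t in Ioi (0:ℝ), |subordK f x t| ≤ ∫ t in Ioi (0:ℝ), (4 * π) ^ (-(1/2) : ℝ) *
          ∫ p in Ioi (0:ℝ), |dipole x p * (p ^ (-(3/2) : ℝ) * f p t)| := by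
        refine integral_mono (h.integrableOn_subordK hx).abs
          (h1.abs.integral_prod_right.const_mul _) fun t => ?_
        simp only [subordK]
        rw [abs_mul, abs_of_pos heat_const_pos]
        exact mul_le_mul_of_nonneg_left MeasureTheory.abs_integral_le_integral_abs heat_const_pos.le
    _ = (4 * π) ^ (-(1/2) : ℝ) * ∫ p in Ioi (0:ℝ), ∫ t in Ioi (0:ℝ),
          |dipole x p * (p ^ (-(3/2) : ℝ) * f p t)| := by
        rw [MeasureTheory.integral_const_mul, ← MeasureTheory.integral_integral_swap h1.abs]
    _ ≤ (4 * π) ^ (-(1/2) : ℝ) * (C * √π) := mul_le_mul_of_nonneg_left h2 heat_const_pos.le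
    _ = C * ((4 * π) ^ (-(1/2) : ℝ) * √π) := by ring
    _ ≤ C := by rw [heat_const_mul_sqrt_pi]; linarith

theorem IsSubordinatorFamily.integral_subordK (h : IsSubordinatorFamily a b C f) {x : ℝ}
    (hx : x ≠ 0) : ∫ t in Ioi (0:ℝ), subordK f x t = -(x / |x|) / 2 := by
  have h1 := (h.integrable_dipole_prod hx).1
  have h2 : ∀ p ∈ Ioi (0:ℝ), ∫ t in Ioi (0:ℝ), dipole x p * (p ^ (-(3/2) : ℝ) * f p t) =
      -(x / 2) * (p ^ (-(3/2) : ℝ) * Real.exp (-x ^ 2 / (4 * p))) := by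
    intro p hp
    rw [MeasureTheory.integral_const_mul, MeasureTheory.integral_const_mul,
      setIntegral_eq_integral_of_forall_compl_eq_zero (s := Ioi (0:ℝ)) fun t ht => h.eq_zero p t (not_lt.1 ht),
      h.integral_eq_one p hp, dipole]
    ring
  simp only [subordK]
  rw [MeasureTheory.integral_const_mul, ← MeasureTheory.integral_integral_swap h1,
    setIntegral_congr_fun measurableSet_Ioi h2, MeasureTheory.integral_const_mul,
    integral_heat_weight hx]
  calc _ = ((4 * π) ^ (-(1/2) : ℝ) * √π) * -(x / |x|) := by ring
    _ = _ := by rw [heat_const_mul_sqrt_pi]; ring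

theorem IsSubordinatorFamily.isJumpKernel (h : IsSubordinatorFamily a b C f) :
    IsJumpKernel a b (24 * C) (subordE f) (subordK f) where
  nonneg := by linarith [h.nonneg]
  measurable_left := measurable_subordE h.measurable
  measurable_right := measurable_subordK h.measurable
  hasDerivAt x t ht := h.hasDerivAt_subordE x ht
  abs_le x t ht := (h.abs_subordE_le x ht).trans (by
    have := h.nonneg
    have := rpow_pos_of_pos ht (a / 2 - 1)
    have := rpow_pos_of_pos ht (b / 2 - 1)
    gcongr; norm_num)
  abs_sub_le x y t ht := (h.abs_subordK_sub_le x y ht).trans (by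
    have := h.nonneg
    have := rpow_pos_of_pos ht (-1 - a / 2)
    have := rpow_pos_of_pos ht (-1 - b / 2)
    gcongr; norm_num)
  zero_left t := by simp [subordK, dipole]
  abs_le_of_ne x t hx ht := h.abs_subordK_le hx ht
  integrableOn x hx := h.integrableOn_subordK hx
  integral_abs_le x hx := (h.integral_abs_subordK_le hx).trans (by linarith [h.nonneg])
  integral_of_pos x hx := by
    rw [h.integral_subordK hx.ne', abs_of_pos hx, div_self hx.ne']; norm_num
  integral_of_neg x hx := by
    rw [h.integral_subordK hx.ne, abs_of_neg hx, div_neg, div_self hx.ne]; norm_num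

end

theorem rpow_add_rpow_le {r t u v : ℝ} (hr : 0 < r) (hrt : r ≤ t) (huv : u ≤ v) :
    r ^ v + r ^ u ≤ (t ^ (v - u) + 1) * r ^ u := by
  have h : r ^ v = r ^ (v - u) * r ^ u := by rw [← rpow_add hr, sub_add_cancel]
  have := rpow_le_rpow hr.le hrt (sub_nonneg.2 huv)
  have := rpow_pos_of_pos hr u
  rw [h, add_mul, one_mul]
  gcongr

theorem integrableOn_rpow_mul_sub_rpow {t u v : ℝ} (ht : 0 < t) (hu : -1 < u) (hu0 : u ≤ 0)
    (hv : -1 < v) : IntegrableOn (fun τ => τ ^ u * (t - τ) ^ v) (Ioo 0 t) := by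
  set w := min v 0 with hw
  have hw1 : -1 < w := lt_min hv (by norm_num)
  have hw0 : w ≤ 0 := min_le_right _ _
  have hwv : w ≤ v := min_le_left _ _
  have i1 : IntegrableOn (fun τ : ℝ => τ ^ u) (Ioo 0 t) :=
    ((intervalIntegrable_iff_integrableOn_Ioo_of_le ht.le).1
      (intervalIntegral.intervalIntegrable_rpow' hu))
  have i2 : IntegrableOn (fun τ : ℝ => (t - τ) ^ w) (Ioo 0 t) := by
    rw [← intervalIntegrable_iff_integrableOn_Ioo_of_le ht.le]
    have := (intervalIntegral.intervalIntegrable_rpow' (a := 0) (b := t) hw1).comp_sub_left t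
    simpa using this.symm
  refine ((i2.const_mul (t ^ (v - w) * (t / 2) ^ u)).add
    (i1.const_mul (t ^ (v - w) * (t / 2) ^ w))).mono'
    (Measurable.aestronglyMeasurable (by fun_prop))
    ((ae_restrict_mem measurableSet_Ioo).mono fun τ hτ => ?_)
  have h1 : 0 < τ := hτ.1
  have h2 : 0 < t - τ := sub_pos.2 hτ.2
  have p1 := rpow_pos_of_pos h1 u
  have p2 := rpow_pos_of_pos h2 w
  have q1 := rpow_pos_of_pos (half_pos ht) u
  have q2 := rpow_pos_of_pos (half_pos ht) w
  have hT := rpow_nonneg ht.le (v - w)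
  have hle : (t - τ) ^ v ≤ t ^ (v - w) * (t - τ) ^ w := by
    have e : (t - τ) ^ v = (t - τ) ^ (v - w) * (t - τ) ^ w := by
      rw [← rpow_add h2, sub_add_cancel]
    rw [e]
    exact mul_le_mul_of_nonneg_right
      (rpow_le_rpow h2.le (by linarith) (sub_nonneg.2 hwv)) p2.le
  have key : τ ^ u * (t - τ) ^ w ≤ (t / 2) ^ u * (t - τ) ^ w + (t / 2) ^ w * τ ^ u := by
    rcases le_total (t / 2) τ with h | h
    · have := rpow_le_rpow_of_nonpos (half_pos ht) h hu0
      have : τ ^ u * (t - τ) ^ w ≤ (t / 2) ^ u * (t - τ) ^ w := by gcongr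
      have : 0 < (t / 2) ^ w * τ ^ u := by positivity
      linarith
    · have := rpow_le_rpow_of_nonpos (half_pos ht) (show t / 2 ≤ t - τ by linarith) hw0
      have : τ ^ u * (t - τ) ^ w ≤ τ ^ u * (t / 2) ^ w := by gcongr
      have : 0 < (t / 2) ^ u * (t - τ) ^ w := by positivity
      linarith
  rw [Real.norm_eq_abs, abs_of_nonneg (mul_nonneg p1.le (rpow_nonneg h2.le _))]
  calc τ ^ u * (t - τ) ^ v ≤ τ ^ u * (t ^ (v - w) * (t - τ) ^ w) := by gcongr
    _ = t ^ (v - w) * (τ ^ u * (t - τ) ^ w) := by ring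
    _ ≤ t ^ (v - w) * ((t / 2) ^ u * (t - τ) ^ w + (t / 2) ^ w * τ ^ u) := by gcongr
    _ = _ := by simp only [Pi.add_apply]; ring

/-- A concentration lemma for signed kernels bounded in `L¹`. -/
theorem tendsto_integral_mul_of_concentrating {ι : Type*} {l : Filter ι} {k : ι → ℝ → ℝ}
    {r M : ℝ → ℝ} {w : ι → ℝ} {C : ℝ} (hr : Tendsto r (𝓝[>] 0) (𝓝 0))
    (hk : ∀ᶠ i in l, IntegrableOn (k i) (Ioi 0) ∧ ∫ x in Ioi (0:ℝ), |k i x| ≤ C)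
    (hkM : ∀ i x, 0 < x → |k i x| ≤ w i * M x) (hw : Tendsto w l (𝓝 0))
    (hM : ∀ d, 0 < d → IntegrableOn (fun x => r x * M x) (Ioi d)) :
    Tendsto (fun i => ∫ x in Ioi (0:ℝ), r x * k i x) l (𝓝 0) := by
  rw [Metric.tendsto_nhds]
  intro ε hε
  set e := ε / (2 * (|C| + 1)) with he
  have he0 : 0 < e := by positivity
  obtain ⟨d, hd, hdr⟩ : ∃ d > 0, ∀ x ∈ Ioo 0 d, |r x| < e := by
    have := (Metric.tendsto_nhds.1 hr) e he0
    obtain ⟨d, hd, h⟩ := mem_nhdsGT_iff_exists_Ioo_subset.1 this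
    exact ⟨d, hd, fun x hx => by simpa [Real.dist_eq] using h hx⟩
  set d' := d / 2 with hd'
  have hd0 : 0 < d' := half_pos hd
  set G := ∫ x in Ioi d', |r x * M x| with hG
  have hwG : ∀ᶠ i in l, |w i| * G < ε / 2 := by
    have : Tendsto (fun i => |w i| * G) l (𝓝 (|0| * G)) := hw.abs.mul_const G
    rw [abs_zero, zero_mul] at this
    exact this.eventually (gt_mem_nhds (half_pos hε))
  filter_upwards [hk, hwG] with i hi hiG
  have i1 : IntegrableOn (fun x => e * |k i x|) (Ioi 0) := hi.1.abs.const_mul e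
  have i2' : IntegrableOn (fun x => |w i| * |r x * M x|) (Ioi d') := (hM d' hd0).abs.const_mul _
  have i2 : IntegrableOn ((Ioi d').indicator fun x => |w i| * |r x * M x|) (Ioi 0) :=
    ((integrable_indicator_iff measurableSet_Ioi).2 i2').integrableOn
  have hle : ‖∫ x in Ioi (0:ℝ), r x * k i x‖ ≤ ∫ x in Ioi (0:ℝ), (e * |k i x| +
      (Ioi d').indicator (fun x => |w i| * |r x * M x|) x) := by
    refine norm_integral_le_of_norm_le (i1.add i2)
      ((ae_restrict_mem measurableSet_Ioi).mono fun x hx => ?_)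
    rw [Real.norm_eq_abs, abs_mul]
    by_cases hxd : x ∈ Ioi d'
    · rw [indicator_of_mem hxd, abs_mul]
      have h1 := (hkM i x hx).trans (le_abs_self _)
      rw [abs_mul] at h1
      have h2 : 0 ≤ e * |k i x| := by positivity
      have h3 := mul_le_mul_of_nonneg_left h1 (abs_nonneg (r x))
      linarith
    · rw [indicator_of_notMem hxd, add_zero]
      have := (hdr x ⟨hx, by rw [mem_Ioi, not_lt] at hxd; linarith⟩).le
      gcongr
  rw [MeasureTheory.integral_add i1 i2, MeasureTheory.integral_const_mul,
    setIntegral_indicator measurableSet_Ioi, inter_eq_right.2 (Ioi_subset_Ioi hd0.le),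
    MeasureTheory.integral_const_mul] at hle
  rw [dist_zero_right]
  have h1 : e * ∫ x in Ioi (0:ℝ), |k i x| ≤ ε / 2 := by
    calc e * ∫ x in Ioi (0:ℝ), |k i x| ≤ e * (|C| + 1) := by
          gcongr
          linarith [hi.2, le_abs_self C]
      _ = ε / 2 := by rw [he]; field_simp
  linarith

section

variable {a b C B β t : ℝ} {E K : ℝ → ℝ → ℝ} {φ s : ℝ → ℝ}

theorem aestronglyMeasurable_mul_kernel {k : ℝ → ℝ → ℝ} {g : ℝ → ℝ}
    (hk : Measurable (Function.uncurry k)) (hφ : ContinuousOn φ (Ioo 0 t))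
    (hg : ContinuousOn g (Ioo 0 t)) :
    AEStronglyMeasurable (fun τ => φ τ * k (g τ) (t - τ)) (volume.restrict (Ioo 0 t)) := by
  refine (hφ.aestronglyMeasurable measurableSet_Ioo).mul ?_
  have h : AEMeasurable (fun τ => (g τ, t - τ)) (volume.restrict (Ioo 0 t)) :=
    (hg.aemeasurable measurableSet_Ioo).prodMk (by fun_prop)
  exact (hk.comp_aemeasurable h).aestronglyMeasurable

theorem integrableOn_of_abs_le {g k : ℝ → ℝ} {D v : ℝ} (ha : 0 < a) (ha1 : a ≤ 1) (ht : 0 < t)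
    (hv : -1 < v) (hφB : ∀ τ ∈ Ioo 0 t, |φ τ| ≤ B * τ ^ (a - 1))
    (hk : ∀ τ ∈ Ioo 0 t, |k τ| ≤ D * (t - τ) ^ v)
    (hg : ∀ τ ∈ Ioo 0 t, g τ = φ τ * k τ)
    (hm : AEStronglyMeasurable g (volume.restrict (Ioo 0 t))) : IntegrableOn g (Ioo 0 t) := by
  refine ((integrableOn_rpow_mul_sub_rpow ht (u := a - 1) (by linarith) (by linarith)
    hv).const_mul (B * D)).mono' hm ((ae_restrict_mem measurableSet_Ioo).mono fun τ hτ => ?_)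
  rw [hg τ hτ, Real.norm_eq_abs, abs_mul]
  calc _ ≤ (B * τ ^ (a - 1)) * (D * (t - τ) ^ v) :=
        mul_le_mul (hφB τ hτ) (hk τ hτ) (abs_nonneg _) ((abs_nonneg _).trans (hφB τ hτ))
    _ = _ := by ring

theorem IsJumpKernel.exists_abs_sub_le (hJ : IsJumpKernel a b C E K) (hba : b ≤ a) (t : ℝ) :
    ∃ D, 0 ≤ D ∧ ∀ x y r, 0 < r → r ≤ t → |K x r - K y r| ≤ D * |x - y| * r ^ (-1 - a / 2) := by
  refine ⟨C * (t ^ ((-1 - b / 2) - (-1 - a / 2)) + 1) ⊔ 0, le_max_right _ _,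
    fun x y r hr hrt => (hJ.abs_sub_le x y r hr).trans ?_⟩
  have h := rpow_add_rpow_le hr hrt (show -1 - a / 2 ≤ -1 - b / 2 by linarith)
  have hC := hJ.nonneg
  have := rpow_pos_of_pos hr (-1 - a / 2)
  calc _ ≤ C * |x - y| * ((t ^ ((-1 - b / 2) - (-1 - a / 2)) + 1) * r ^ (-1 - a / 2)) := by
        rw [add_comm (r ^ (-1 - a / 2))]; gcongr
    _ = C * (t ^ ((-1 - b / 2) - (-1 - a / 2)) + 1) * |x - y| * r ^ (-1 - a / 2) := by ring
    _ ≤ _ := by gcongr; exact le_max_left _ _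

theorem IsJumpKernel.exists_abs_le (hJ : IsJumpKernel a b C E K) (hba : b ≤ a) (t : ℝ) :
    ∃ D, 0 ≤ D ∧ ∀ x r, x ≠ 0 → 0 < r → r ≤ t → |K x r| ≤ D * (x ^ 2)⁻¹ * r ^ (b - 1) := by
  refine ⟨C * (t ^ ((a - 1) - (b - 1)) + 1) ⊔ 0, le_max_right _ _,
    fun x r hx hr hrt => (hJ.abs_le_of_ne x r hx hr).trans ?_⟩
  have h := rpow_add_rpow_le hr hrt (show b - 1 ≤ a - 1 by linarith)
  have hC := hJ.nonneg
  have := rpow_pos_of_pos hr (b - 1)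
  calc _ ≤ C * (x ^ 2)⁻¹ * ((t ^ ((a - 1) - (b - 1)) + 1) * r ^ (b - 1)) := by gcongr
    _ = C * (t ^ ((a - 1) - (b - 1)) + 1) * (x ^ 2)⁻¹ * r ^ (b - 1) := by ring
    _ ≤ _ := by gcongr; exact le_max_left _ _

theorem IsJumpKernel.exists_abs_le_left (hJ : IsJumpKernel a b C E K) (hba : b ≤ a) (t : ℝ) :
    ∃ D, ∀ x r, 0 < r → r ≤ t → |E x r| ≤ D * r ^ (b / 2 - 1) := by
  refine ⟨C * (t ^ ((a / 2 - 1) - (b / 2 - 1)) + 1), fun x r hr hrt => (hJ.abs_le x r hr).trans ?_⟩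
  rw [mul_assoc]
  exact mul_le_mul_of_nonneg_left (rpow_add_rpow_le hr hrt (by linarith)) hJ.nonneg

/-- Off the boundary point `s t` the potential may be differentiated under the integral. -/
theorem IsJumpKernel.hasDerivAt_potential (hJ : IsJumpKernel a b C E K) (hb : 0 < b) (hba : b ≤ a)
    (ha1 : a ≤ 1) (ht : 0 < t) (hφ : ContinuousOn φ (Ioo 0 t))
    (hφB : ∀ τ ∈ Ioo 0 t, |φ τ| ≤ B * τ ^ (a - 1)) (hs : ContinuousOn s (Ioo 0 t)) (hβ : 0 < β)
    (hsβ : ∀ τ ∈ Ioo 0 t, |s t - s τ| ≤ (t - τ) ^ β) {x : ℝ} (hx : x ≠ s t) :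
    HasDerivAt (fun y => ∫ τ in Ioo 0 t, φ τ * E (y - s τ) (t - τ))
      (∫ τ in Ioo 0 t, φ τ * K (x - s τ) (t - τ)) x := by
  have ha : 0 < a := hb.trans_le hba
  obtain ⟨D1, hD1, h1⟩ := hJ.exists_abs_sub_le hba t
  obtain ⟨D2, hD2, h2⟩ := hJ.exists_abs_le hba t
  obtain ⟨D3, h3⟩ := hJ.exists_abs_le_left hba t
  set η := |x - s t| / 3 with hη
  have hη0 : 0 < η := by have := abs_pos.2 (sub_ne_zero.2 hx); positivity
  set c := (η ^ β⁻¹) ^ (-1 - a / 2) with hc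
  have hgc : ∀ y, ContinuousOn (fun τ => y - s τ) (Ioo 0 t) := fun y => continuousOn_const.sub hs
  have hK : ∀ τ ∈ Ioo 0 t, ∀ y ∈ Metric.ball x η,
      |K (y - s τ) (t - τ)| ≤ D2 * (η ^ 2)⁻¹ * (t - τ) ^ (b - 1) + D1 * η * c := by
    intro τ hτ y hy
    have hr : 0 < t - τ := sub_pos.2 hτ.2
    have hrt : t - τ ≤ t := by linarith [hτ.1]
    have hc0 : 0 ≤ c := by positivity
    have hr' := rpow_pos_of_pos hr (b - 1)
    by_cases hyη : η ≤ |y - s τ|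
    · have hne : y - s τ ≠ 0 := abs_pos.1 (hη0.trans_le hyη)
      have hsq : η ^ 2 ≤ (y - s τ) ^ 2 := by rw [← sq_abs (y - s τ)]; gcongr
      have : |K (y - s τ) (t - τ)| ≤ D2 * (η ^ 2)⁻¹ * (t - τ) ^ (b - 1) :=
        (h2 _ _ hne hr hrt).trans (by gcongr)
      have : 0 ≤ D1 * η * c := by positivity
      linarith
    · have hyη := not_le.1 hyη
      have hxy : |x - y| < η := by rw [abs_sub_comm]; simpa [Real.dist_eq] using hy
      have htri : |x - s t| ≤ |x - y| + |y - s τ| + |s t - s τ| := by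
        have e : x - s t = (x - y) + (y - s τ) - (s t - s τ) := by ring
        rw [e]
        exact (abs_sub _ _).trans (by gcongr; exact abs_add_le _ _)
      have hηβ : η ≤ (t - τ) ^ β := by
        have := hsβ τ hτ
        have : |x - s t| = 3 * η := by rw [hη]; ring
        linarith
      have hηr : η ^ β⁻¹ ≤ t - τ := by
        have := rpow_le_rpow hη0.le hηβ (inv_nonneg.2 hβ.le)
        rwa [← rpow_mul hr.le, mul_inv_cancel₀ hβ.ne', rpow_one] at this
      have hpow : (t - τ) ^ (-1 - a / 2) ≤ c :=
        rpow_le_rpow_of_nonpos (rpow_pos_of_pos hη0 _) hηr (by linarith)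
      have h0 := h1 (y - s τ) 0 (t - τ) hr hrt
      rw [hJ.zero_left, sub_zero, sub_zero] at h0
      have hp := rpow_pos_of_pos hr (-1 - a / 2)
      have : D1 * |y - s τ| * (t - τ) ^ (-1 - a / 2) ≤ D1 * η * c := by gcongr
      have : 0 ≤ D2 * (η ^ 2)⁻¹ * (t - τ) ^ (b - 1) := by positivity
      linarith
  have hbase := integrableOn_rpow_mul_sub_rpow ht (u := a - 1) (v := b - 1) (by linarith)
    (by linarith) (by linarith)
  have hbase0 := integrableOn_rpow_mul_sub_rpow ht (u := a - 1) (v := 0) (by linarith)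
    (by linarith) (by linarith)
  refine (hasDerivAt_integral_of_dominated_loc_of_deriv_le (μ := volume.restrict (Ioo 0 t))
    (s := Metric.ball x η) (F := fun y τ => φ τ * E (y - s τ) (t - τ))
    (F' := fun y τ => φ τ * K (y - s τ) (t - τ))
    (bound := fun τ => B * (D2 * (η ^ 2)⁻¹) * (τ ^ (a - 1) * (t - τ) ^ (b - 1)) +
      B * (D1 * η * c) * (τ ^ (a - 1) * (t - τ) ^ (0:ℝ)))
    (Metric.ball_mem_nhds x hη0)
    (Eventually.of_forall fun y => aestronglyMeasurable_mul_kernel hJ.measurable_left hφ (hgc y))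
    ?_ (aestronglyMeasurable_mul_kernel hJ.measurable_right hφ (hgc x)) ?_
    ((hbase.const_mul _).add (hbase0.const_mul _)) ?_).2
  · exact integrableOn_of_abs_le (k := fun τ => E (x - s τ) (t - τ)) ha ha1 ht
      (show -1 < b / 2 - 1 by linarith) hφB
      (fun τ hτ => h3 _ _ (sub_pos.2 hτ.2) (by linarith [hτ.1])) (fun _ _ => rfl)
      (aestronglyMeasurable_mul_kernel hJ.measurable_left hφ (hgc x))
  · refine (ae_restrict_mem measurableSet_Ioo).mono fun τ hτ y hy => ?_
    rw [Real.norm_eq_abs, abs_mul]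
    calc _ ≤ (B * τ ^ (a - 1)) * (D2 * (η ^ 2)⁻¹ * (t - τ) ^ (b - 1) + D1 * η * c) :=
          mul_le_mul (hφB τ hτ) (hK τ hτ y hy) (abs_nonneg _) ((abs_nonneg _).trans (hφB τ hτ))
      _ = _ := by rw [rpow_zero]; ring
  · refine (ae_restrict_mem measurableSet_Ioo).mono fun τ hτ y _ => ?_
    have := (hJ.hasDerivAt (y - s τ) (t - τ) (sub_pos.2 hτ.2)).comp y
      ((hasDerivAt_id y).sub_const (s τ))
    simpa [Function.comp_def] using this.const_mul (φ τ)

/-- Concentration of the kernel on a fixed (vertical) boundary. -/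
theorem IsJumpKernel.tendsto_vertical (hJ : IsJumpKernel a b C E K) (hb : 0 < b) (hba : b ≤ a)
    (ha1 : a ≤ 1) (ht : 0 < t) (hφ : ContinuousOn φ (Ioc 0 t))
    (hφB : ∀ τ ∈ Ioo 0 t, |φ τ| ≤ B * τ ^ (a - 1)) {l : Filter ℝ} {L : ℝ} (hl : l ≤ 𝓝 0)
    (hne : ∀ᶠ h in l, h ≠ 0) (hL : ∀ᶠ h in l, ∫ r in Ioi (0:ℝ), K h r = L) :
    Tendsto (fun h => ∫ τ in Ioo 0 t, φ τ * K h (t - τ)) l (𝓝 (φ t * L)) := by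
  have ha : 0 < a := hb.trans_le hba
  obtain ⟨D2, hD2, h2⟩ := hJ.exists_abs_le hba t
  have hφ' : ContinuousOn φ (Ioo 0 t) := hφ.mono Ioo_subset_Ioc_self
  set g : ℝ → ℝ := (Ioo 0 t).indicator fun r => φ (t - r) with hg
  set M : ℝ → ℝ := fun r => r ^ (-1 - a / 2) + r ^ (-1 - b / 2) with hM
  have hflip : ∀ k : ℝ → ℝ, ∫ τ in Ioo 0 t, φ τ * k (t - τ) = ∫ r in Ioi (0:ℝ), g r * k r := by
    intro k
    have e := intervalIntegral.integral_comp_sub_left (a := 0) (b := t)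
      (fun r => φ (t - r) * k r) t
    simp only [sub_sub_cancel, sub_self, sub_zero] at e
    rw [intervalIntegral.integral_of_le ht.le, intervalIntegral.integral_of_le ht.le,
      integral_Ioc_eq_integral_Ioo, integral_Ioc_eq_integral_Ioo] at e
    rw [e, ← inter_eq_right.2 (show Ioo 0 t ⊆ Ioi 0 from Ioo_subset_Ioi_self),
      ← setIntegral_indicator measurableSet_Ioo]
    refine integral_congr_ae (ae_of_all _ fun r => ?_)
    by_cases hr : r ∈ Ioo 0 t <;> simp [hg, hr]
  have hiflip : ∀ k : ℝ → ℝ, IntegrableOn (fun τ => φ τ * k (t - τ)) (Ioo 0 t) →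
      IntegrableOn (fun r => g r * k r) (Ioi 0) := by
    intro k hk
    have e : (fun r => g r * k r) = (Ioo 0 t).indicator fun r => φ (t - r) * k r := by
      ext r
      by_cases hr : r ∈ Ioo 0 t <;> simp [hg, hr]
    rw [e]
    refine ((integrable_indicator_iff measurableSet_Ioo).2 ?_).integrableOn
    rw [← intervalIntegrable_iff_integrableOn_Ioo_of_le ht.le] at hk ⊢
    simpa using (hk.comp_sub_left t).symm
  have hgt : Tendsto (fun r => g r - φ t) (𝓝[>] 0) (𝓝 0) := by
    have hφt : Tendsto φ (𝓝[Ioc 0 t] t) (𝓝 (φ t)) := hφ t ⟨ht, le_rfl⟩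
    have hsub : Tendsto (fun r => t - r) (𝓝[>] 0) (𝓝[Ioc 0 t] t) := by
      refine tendsto_nhdsWithin_iff.2 ⟨?_, ?_⟩
      · have : Tendsto (fun r => t - r) (𝓝 0) (𝓝 (t - 0)) := by
          exact tendsto_const_nhds.sub tendsto_id
        rw [sub_zero] at this
        exact this.mono_left nhdsWithin_le_nhds
      · filter_upwards [Ioo_mem_nhdsGT ht] with r hr
        exact ⟨by linarith [hr.2], by linarith [hr.1]⟩
    have h0 : Tendsto (fun r => φ (t - r) - φ t) (𝓝[>] 0) (𝓝 0) := by
      simpa using (hφt.comp hsub).sub_const (φ t)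
    refine h0.congr' ?_
    filter_upwards [Ioo_mem_nhdsGT ht] with r hr
    rw [hg, indicator_of_mem hr]
  have hφi : IntegrableOn φ (Ioo 0 t) :=
    integrableOn_of_abs_le (k := fun _ => 1) (D := 1) (v := 0) ha ha1 ht (by norm_num) hφB
      (fun τ _ => by simp) (fun τ _ => by simp) (hφ'.aestronglyMeasurable measurableSet_Ioo)
  have hgi : IntegrableOn g (Ioi 0) := by simpa using hiflip (fun _ => 1) (by simpa using hφi)
  have hMi : ∀ d, 0 < d → IntegrableOn (fun r => (g r - φ t) * M r) (Ioi d) := by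
    intro d hd
    have hMd : IntegrableOn M (Ioi d) :=
      (integrableOn_Ioi_rpow_of_lt (by linarith) hd).add
        (integrableOn_Ioi_rpow_of_lt (by linarith) hd)
    have h1 : IntegrableOn (fun r => g r * M r) (Ioi d) := by
      refine (hgi.mono_set (Ioi_subset_Ioi hd.le)).mul_bdd (c := M d) hMd.aestronglyMeasurable
        ((ae_restrict_mem measurableSet_Ioi).mono fun r hr => ?_)
      have hr : d < r := hr
      have hr0 := hd.trans hr
      rw [Real.norm_eq_abs, abs_of_nonneg (add_nonneg (rpow_nonneg hr0.le _) (rpow_nonneg hr0.le _))]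
      exact add_le_add (rpow_le_rpow_of_nonpos hd hr.le (by linarith))
        (rpow_le_rpow_of_nonpos hd hr.le (by linarith))
    refine IntegrableOn.congr_fun (h1.sub (hMd.const_mul (φ t))) (fun r _ => ?_) measurableSet_Ioi
    simp only [Pi.sub_apply]
    ring
  have hpeak := tendsto_integral_mul_of_concentrating (l := l) (k := K) (w := fun h => C * |h|)
    (C := C) hgt (hne.mono fun h hh => ⟨hJ.integrableOn h hh, hJ.integral_abs_le h hh⟩)
    (fun h r hr => by simpa [hJ.zero_left] using hJ.abs_sub_le h 0 r hr)
    (by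
      have : Tendsto (fun h : ℝ => C * |h|) (𝓝 0) (𝓝 (C * |0|)) :=
        (tendsto_id.abs).const_mul C
      simpa using this.mono_left hl) hMi
  have := hpeak.add_const (φ t * L)
  rw [zero_add] at this
  refine this.congr' ?_
  filter_upwards [hne, hL] with h hh hhL
  have hKi := hJ.integrableOn h hh
  have hmeas : AEStronglyMeasurable (fun τ => φ τ * K h (t - τ)) (volume.restrict (Ioo 0 t)) :=
    aestronglyMeasurable_mul_kernel hJ.measurable_right hφ' continuousOn_const
  have hi : IntegrableOn (fun r => g r * K h r) (Ioi 0) :=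
    hiflip _ (integrableOn_of_abs_le (k := fun τ => K h (t - τ)) ha ha1 ht
      (show -1 < b - 1 by linarith) hφB
      (fun τ hτ => h2 h _ hh (sub_pos.2 hτ.2) (by linarith [hτ.1])) (fun _ _ => rfl) hmeas)
  rw [hflip (K h), ← hhL, ← MeasureTheory.integral_const_mul,
    ← MeasureTheory.integral_add ?_ (hKi.const_mul _)]
  · refine integral_congr_ae (ae_of_all _ fun r => ?_)
    simp only
    ring
  · simp_rw [sub_mul]
    exact hi.sub (hKi.const_mul _)

theorem IsJumpKernel.tendsto_deriv_potential (hJ : IsJumpKernel a b C E K) (hb : 0 < b)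
    (hba : b ≤ a) (ha1 : a ≤ 1) (ht : 0 < t) (hφ : ContinuousOn φ (Ioc 0 t))
    (hφB : ∀ τ ∈ Ioo 0 t, |φ τ| ≤ B * τ ^ (a - 1)) (hs : ContinuousOn s (Ioo 0 t))
    (hβ : a / 2 < β) (hsβ : ∀ τ ∈ Ioo 0 t, |s t - s τ| ≤ (t - τ) ^ β) {l : Filter ℝ} {L : ℝ}
    (hl : l ≤ 𝓝 (s t)) (hne : ∀ᶠ x in l, x ≠ s t)
    (hL : ∀ᶠ x in l, ∫ r in Ioi (0:ℝ), K (x - s t) r = L) :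
    Tendsto (fun x => deriv (fun y => ∫ τ in Ioo 0 t, φ τ * E (y - s τ) (t - τ)) x) l
      (𝓝 (L * φ t + ∫ τ in Ioo 0 t, φ τ * K (s t - s τ) (t - τ))) := by
  have ha : 0 < a := hb.trans_le hba
  have hφ' : ContinuousOn φ (Ioo 0 t) := hφ.mono Ioo_subset_Ioc_self
  obtain ⟨D1, hD1, h1⟩ := hJ.exists_abs_sub_le hba t
  obtain ⟨D2, hD2, h2⟩ := hJ.exists_abs_le hba t
  have hmeas : ∀ x, AEStronglyMeasurable (fun τ => φ τ * K (x - s τ) (t - τ))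
      (volume.restrict (Ioo 0 t)) := fun x =>
    aestronglyMeasurable_mul_kernel hJ.measurable_right hφ' (continuousOn_const.sub hs)
  have hmeas' : ∀ x, AEStronglyMeasurable (fun τ => φ τ * K (x - s t) (t - τ))
      (volume.restrict (Ioo 0 t)) := fun x =>
    aestronglyMeasurable_mul_kernel hJ.measurable_right hφ' continuousOn_const
  have hdm : ∀ x, AEStronglyMeasurable (fun τ => φ τ * (K (x - s τ) (t - τ) - K (x - s t) (t - τ)))
      (volume.restrict (Ioo 0 t)) := fun x => by
    simp only [mul_sub]
    exact (hmeas x).sub (hmeas' x)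
  have hdiff : ∀ x, ∀ τ ∈ Ioo 0 t,
      |K (x - s τ) (t - τ) - K (x - s t) (t - τ)| ≤ D1 * (t - τ) ^ (β - 1 - a / 2) := by
    intro x τ hτ
    have hr : 0 < t - τ := sub_pos.2 hτ.2
    refine (h1 _ _ _ hr (by linarith [hτ.1])).trans ?_
    have := rpow_pos_of_pos hr (-1 - a / 2)
    rw [sub_sub_sub_cancel_left, show β - 1 - a / 2 = β + (-1 - a / 2) by ring, rpow_add hr,
      ← mul_assoc]
    gcongr
    exact hsβ τ hτ
  have hbase := integrableOn_rpow_mul_sub_rpow ht (u := a - 1) (v := β - 1 - a / 2) (by linarith)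
    (by linarith) (by linarith)
  have hmain : Tendsto
      (fun x => ∫ τ in Ioo 0 t, φ τ * (K (x - s τ) (t - τ) - K (x - s t) (t - τ))) (𝓝 (s t))
      (𝓝 (∫ τ in Ioo 0 t, φ τ * K (s t - s τ) (t - τ))) := by
    refine tendsto_integral_filter_of_dominated_convergence
      (fun τ => B * D1 * (τ ^ (a - 1) * (t - τ) ^ (β - 1 - a / 2))) (Eventually.of_forall hdm)
      (Eventually.of_forall fun x => (ae_restrict_mem measurableSet_Ioo).mono fun τ hτ => ?_)
      (hbase.const_mul _) ((ae_restrict_mem measurableSet_Ioo).mono fun τ hτ => ?_)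
    · rw [Real.norm_eq_abs, abs_mul]
      calc _ ≤ (B * τ ^ (a - 1)) * (D1 * (t - τ) ^ (β - 1 - a / 2)) :=
            mul_le_mul (hφB τ hτ) (hdiff x τ hτ) (abs_nonneg _)
              ((abs_nonneg _).trans (hφB τ hτ))
        _ = _ := by ring
    · have hc : Continuous fun x => K x (t - τ) := by
        refine LipschitzWith.continuous (K := (D1 * (t - τ) ^ (-1 - a / 2)).toNNReal)
          (LipschitzWith.of_dist_le_mul fun x y => ?_)
        rw [Real.coe_toNNReal _ (mul_nonneg hD1 (rpow_nonneg (sub_nonneg.2 hτ.2.le) _)),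
          Real.dist_eq, Real.dist_eq]
        exact (h1 x y _ (sub_pos.2 hτ.2) (by linarith [hτ.1])).trans (le_of_eq (by ring))
      have hc' : Continuous fun x => φ τ * (K (x - s τ) (t - τ) - K (x - s t) (t - τ)) :=
        continuous_const.mul ((hc.comp (continuous_id.sub continuous_const)).sub
          (hc.comp (continuous_id.sub continuous_const)))
      simpa [hJ.zero_left] using hc'.tendsto (s t)
  have htr : Tendsto (fun x => x - s t) l (𝓝 0) := by
    have : Tendsto (fun x => x - s t) (𝓝 (s t)) (𝓝 (s t - s t)) := tendsto_id.sub_const _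
    rw [sub_self] at this
    exact this.mono_left hl
  have hvert := (hJ.tendsto_vertical hb hba ha1 ht hφ hφB (l := l.map fun x => x - s t) (L := L)
    htr (eventually_map.2 (hne.mono fun x hx => sub_ne_zero.2 hx)) (eventually_map.2 hL)).comp
    tendsto_map
  have hsum := hvert.add (hmain.mono_left hl)
  rw [mul_comm (φ t)] at hsum
  refine hsum.congr' ?_
  filter_upwards [hne] with x hx
  rw [(hJ.hasDerivAt_potential hb hba ha1 ht hφ' hφB hs (by linarith) hsβ hx).deriv,
    Function.comp_apply, ← MeasureTheory.integral_add]
  · refine integral_congr_ae (ae_of_all _ fun τ => ?_)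
    simp only
    ring
  · exact integrableOn_of_abs_le (k := fun τ => K (x - s t) (t - τ)) ha ha1 ht
      (show -1 < b - 1 by linarith) hφB
      (fun τ hτ => h2 _ _ (sub_ne_zero.2 hx) (sub_pos.2 hτ.2) (by linarith [hτ.1]))
      (fun _ _ => rfl) (hmeas' x)
  · exact integrableOn_of_abs_le
      (k := fun τ => K (x - s τ) (t - τ) - K (x - s t) (t - τ)) ha ha1 ht
      (show -1 < β - 1 - a / 2 by linarith) hφB (hdiff x) (fun _ _ => rfl) (hdm x)

end

theorem Gam1_zero_eq_subordE {n : ℕ} {α lam : Fin (n + 1) → ℝ} {f : ℝ → ℝ → ℝ}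
    (hf : ∀ p t, 0 < p → 0 < t → Sconv n 0 α (fun j => lam j * p) t = f p t) (x : ℝ) {t : ℝ}
    (ht : 0 < t) : kerE n α lam x t = subordE f x t := by
  rw [kerE, Gam1, subordE]
  congr 1
  exact setIntegral_congr_fun measurableSet_Ioi fun p hp => by simp only [hf p t hp ht]

theorem intervalIntegral_congr_Ioo {f g : ℝ → ℝ} {t : ℝ} (ht : 0 ≤ t)
    (h : ∀ τ ∈ Ioo 0 t, f τ = g τ) : ∫ τ in (0:ℝ)..t, f τ = ∫ τ in Ioo 0 t, g τ := by
  rw [intervalIntegral.integral_of_le ht, integral_Ioc_eq_integral_Ioo]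
  exact setIntegral_congr_fun measurableSet_Ioo h

/-- Jump relation for the derivative of the `E`-potential across the moving
boundary `x = s(t)`: as `x → s(t)⁻` the derivative of the potential tends to
`(1/2)φ(t) + ∫₀ᵗ φ(τ) E_x(s(t)-s(τ), t-τ) dτ`, and as `x → s(t)⁺` it tends to
`-(1/2)φ(t) + ∫₀ᵗ φ(τ) E_x(s(t)-s(τ), t-τ) dτ`. -/
theorem jump_relation_E
    (m : ℕ) (α lam : Fin (m + 1) → ℝ)
    (hmono : StrictMono α) (hpos : ∀ j, 0 < α j) (hlt1 : ∀ j, α j < 1)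
    (hlam : ∀ j, 0 < lam j)
    (T : ℝ) (hT : 0 < T) (φ s : ℝ → ℝ)
    (hφ : ∃ ψ : ℝ → ℝ, ContinuousOn ψ (Set.Icc 0 T) ∧
      ∀ t ∈ Set.Ioc (0:ℝ) T, ψ t = t ^ (1 - α (Fin.last m)) * φ t)
    (β : ℝ) (hβ : α (Fin.last m) / 2 < β)
    (hs : ∀ t ∈ Set.Icc (0:ℝ) T, ∀ τ ∈ Set.Icc (0:ℝ) T, |s t - s τ| ≤ |t - τ| ^ β)
    (t : ℝ) (ht : t ∈ Set.Ioc (0:ℝ) T) :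
    Tendsto
      (fun x => deriv (fun y => ∫ τ in (0:ℝ)..t, φ τ * kerE m α lam (y - s τ) (t - τ)) x)
      (𝓝[<] (s t))
      (𝓝 ((1/2) * φ t + ∫ τ in (0:ℝ)..t, φ τ * kerEx m α lam (s t - s τ) (t - τ))) ∧
    Tendsto
      (fun x => deriv (fun y => ∫ τ in (0:ℝ)..t, φ τ * kerE m α lam (y - s τ) (t - τ)) x)
      (𝓝[>] (s t))
      (𝓝 (-(1/2) * φ t + ∫ τ in (0:ℝ)..t, φ τ * kerEx m α lam (s t - s τ) (t - τ))) := by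
  set a := α (Fin.last m)
  have hba : α 0 ≤ a := hmono.monotone (Fin.zero_le _)
  obtain ⟨C, f, hf, hfS⟩ := exists_isSubordinatorFamily_Sconv (hpos 0) hba (hlt1 _) m α lam
    (fun j => hmono.monotone (Fin.zero_le j)) (fun j => hmono.monotone (Fin.le_last j)) hlam
  have hJ := hf.isJumpKernel
  have hE : ∀ x r, 0 < r → kerE m α lam x r = subordE f x r :=
    fun x r hr => Gam1_zero_eq_subordE hfS x hr
  have hK : ∀ x r, 0 < r → kerEx m α lam x r = subordK f x r := fun x r hr => by
    rw [kerEx, funext fun y => hE y r hr]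
    exact (hJ.hasDerivAt x r hr).deriv
  obtain ⟨ψ, hψc, hψ⟩ := hφ
  have hφψ : ∀ τ ∈ Ioc (0:ℝ) T, φ τ = τ ^ (a - 1) * ψ τ := fun τ hτ => by
    rw [hψ τ hτ, ← mul_assoc, ← rpow_add hτ.1]
    simp
  have hφc : ContinuousOn φ (Ioc 0 t) := by
    have h1 : ContinuousOn (fun τ => τ ^ (a - 1) * ψ τ) (Ioc 0 T) :=
      (continuousOn_id.rpow_const fun τ hτ => Or.inl (ne_of_gt hτ.1)).mul
        (hψc.mono Ioc_subset_Icc_self)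
    exact (h1.congr hφψ).mono (Ioc_subset_Ioc_right ht.2)
  obtain ⟨B, hB⟩ := isCompact_Icc.exists_bound_of_continuousOn hψc
  have hsub : ∀ τ ∈ Ioo 0 t, τ ∈ Ioc 0 T := fun τ hτ => ⟨hτ.1, hτ.2.le.trans ht.2⟩
  have hφB : ∀ τ ∈ Ioo 0 t, |φ τ| ≤ B * τ ^ (a - 1) := fun τ hτ => by
    have h1 := rpow_pos_of_pos hτ.1 (a - 1)
    rw [hφψ τ (hsub τ hτ), abs_mul, abs_of_pos h1, mul_comm]
    exact mul_le_mul_of_nonneg_right (hB τ (Ioc_subset_Icc_self (hsub τ hτ))) h1.le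
  have hβ0 : 0 < β := by linarith [hpos (Fin.last m)]
  have hsc : ContinuousOn s (Ioo 0 t) := by
    intro τ hτ
    have hτT := Ioc_subset_Icc_self (hsub τ hτ)
    refine tendsto_iff_dist_tendsto_zero.2 (squeeze_zero' (g := fun r => |r - τ| ^ β)
      (Eventually.of_forall fun _ => dist_nonneg) ?_ ?_)
    · filter_upwards [self_mem_nhdsWithin] with r hr
      rw [Real.dist_eq]
      exact hs r (Ioc_subset_Icc_self (hsub r hr)) τ hτT
    · have hc : Continuous fun r : ℝ => |r - τ| ^ β :=
        (continuous_id.sub continuous_const).abs.rpow_const fun _ => Or.inr hβ0.le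
      have := hc.tendsto τ
      simp only [sub_self, abs_zero, zero_rpow hβ0.ne'] at this
      exact this.mono_left nhdsWithin_le_nhds
  have hsβ : ∀ τ ∈ Ioo 0 t, |s t - s τ| ≤ (t - τ) ^ β := fun τ hτ => by
    have := hs t (Ioc_subset_Icc_self ht) τ (Ioc_subset_Icc_self (hsub τ hτ))
    rwa [abs_of_pos (sub_pos.2 hτ.2)] at this
  have hpot : (fun y => ∫ τ in (0:ℝ)..t, φ τ * kerE m α lam (y - s τ) (t - τ)) =
      fun y => ∫ τ in Ioo 0 t, φ τ * subordE f (y - s τ) (t - τ) :=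
    funext fun y => intervalIntegral_congr_Ioo ht.1.le fun τ hτ => by
      rw [hE _ _ (sub_pos.2 hτ.2)]
  have hdir : ∫ τ in (0:ℝ)..t, φ τ * kerEx m α lam (s t - s τ) (t - τ) =
      ∫ τ in Ioo 0 t, φ τ * subordK f (s t - s τ) (t - τ) :=
    intervalIntegral_congr_Ioo ht.1.le fun τ hτ => by rw [hK _ _ (sub_pos.2 hτ.2)]
  rw [hpot, hdir]
  constructor
  · refine hJ.tendsto_deriv_potential (hpos 0) hba (hlt1 _).le ht.1 hφc hφB hsc hβ hsβ
      nhdsWithin_le_nhds ?_ ?_ <;> filter_upwards [self_mem_nhdsWithin] with x hx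
    · exact ne_of_lt hx
    · exact hJ.integral_of_neg _ (sub_neg.2 hx)
  · refine hJ.tendsto_deriv_potential (hpos 0) hba (hlt1 _).le ht.1 hφc hφB hsc hβ hsβ
      nhdsWithin_le_nhds ?_ ?_ <;> filter_upwards [self_mem_nhdsWithin] with x hx
    · exact ne_of_gt hx
    · exact hJ.integral_of_pos _ (sub_pos.2 hx)
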